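/- arXiv:1506.01512 — 3 statements merged into one kernel-verified Lean document; each statement's English description precedes it below -/
import Mathlib

section
/- Let n ≥ 2 be an integer. There exists a constant C depending only on n with the following property. Let I ⊆ ℝ be a bounded open interval and, for j = 2,…,n, let ã_j ∈ C^{n-1,1}(Ī, ℂ) and let r_j : I → ℂ be absolutely continuous with r_j^j = ã_j on I. Let t₀ ∈ I and k ∈ {2,…,n} satisfy |ã_k(t₀)|^{1/k} = max_{2≤j≤n} |ã_j(t₀)|^{1/j} ≠ 0. Let 0 < B < 1/3 and set M := max_{2≤j≤n} (Lip_I(ã_j^{(n-1)}))^{1/n} · |ã_k(t₀)|^{(n−j)/(kn)}. Assume M|I| + Σ_{j=2}^n ∫_I |r_j'| ≤ B |ã_k(t₀)|^{1/k}. Then for all j = 2,…,n and s = 1,…,n−1: ‖ã_j^{(s)}‖_{L^∞(I)} ≤ C |I|^{-s} |ã_k(t₀)|^{j/k} and Lip_I(ã_j^{(n-1)}) ≤ C |I|^{-n} |ã_k(t₀)|^{j/k}. -/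
open Set MeasureTheory Real

noncomputable section

/-- `f` is absolutely continuous on the set `S` : for every `ε > 0` there is `δ > 0` such
that for any finitely many non-overlapping intervals `[u i, v i] ⊆ S` of total length `< δ`
the sum `∑ ‖f (v i) - f (u i)‖` is `< ε`. -/
def AbsContOn {E : Type*} [NormedAddCommGroup E] (f : ℝ → E) (S : Set ℝ) : Prop :=
  ∀ ε : ℝ, 0 < ε → ∃ δ : ℝ, 0 < δ ∧
    ∀ (N : ℕ) (u v : Fin N → ℝ),
      (∀ i, u i ≤ v i ∧ Set.Icc (u i) (v i) ⊆ S) →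
      (∀ i j, i ≠ j → Disjoint (Set.Ioo (u i) (v i)) (Set.Ioo (u j) (v j))) →
      (∑ i, (v i - u i)) < δ →
      (∑ i, ‖f (v i) - f (u i)‖) < ε

/-- `d (i+1)` is the derivative of `d i` on `S` for all `i < k`; thus `d i` is the `i`-th
derivative of `d 0` on `S` for `i ≤ k`. -/
def DerivChain {E : Type*} [NormedAddCommGroup E] [NormedSpace ℝ E]
    (d : ℕ → ℝ → E) (k : ℕ) (S : Set ℝ) : Prop :=
  ∀ i < k, ∀ x ∈ S, HasDerivWithinAt (d i) (d (i + 1) x) S x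

/-- Hölder constant of exponent `a` of `g` on `S`. -/
def HolderConst {E : Type*} [NormedAddCommGroup E] (a : ℝ) (S : Set ℝ) (g : ℝ → E) : ℝ :=
  sSup {r : ℝ | ∃ x ∈ S, ∃ y ∈ S, x ≠ y ∧ r = ‖g x - g y‖ / |x - y| ^ a}

/-- Membership in `C^{k,1}(S)`, encoded via the chain of derivatives `d`:
`d 0` is `k` times differentiable with `i`-th derivative `d i`, and the top
derivative `d k` is Lipschitz. -/
def MemCk1 {E : Type*} [NormedAddCommGroup E] [NormedSpace ℝ E]
    (d : ℕ → ℝ → E) (k : ℕ) (S : Set ℝ) : Prop :=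
  DerivChain d k S ∧ ∃ L : ℝ, ∀ x ∈ S, ∀ y ∈ S, ‖d k x - d k y‖ ≤ L * |x - y|

/-- The `C^{k,1}`-norm: sup of all derivatives up to order `k` plus the Lipschitz
(Hölder-1) constant of the `k`-th derivative. -/
def CNorm {E : Type*} [NormedAddCommGroup E] (d : ℕ → ℝ → E) (k : ℕ) (S : Set ℝ) : ℝ :=
  sSup {r : ℝ | ∃ i ≤ k, ∃ x ∈ S, r = ‖d i x‖} + HolderConst 1 S (d k)

/-! Write `A = ‖ã_k(t₀)‖^{1/k}`. Absolute continuity bounds the oscillation of `r_j` on `I` by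
`∫ ‖r_j'‖ ≤ B A`, and `‖r_j(t₀)‖ ≤ A`, so `‖ã_j‖ = ‖r_j‖^j ≤ (1 + B)^n A^j` on all of `I`. The
bound on `M |I|` gives `Lip(ã_j^{(n-1)}) |I|^n ≤ B^n A^j`. It remains to interpolate: around any
`t ∈ I` the Taylor polynomial of degree `n - 1` differs from `ã_j` by at most `Lip |I|^n`, hence is
`O(A^j)` at `n` equally spaced nodes within distance `|I|/3`, and inverting the Vandermonde matrix
of the nodes bounds its coefficients `ã_j^{(s)}(t) (|I|/3)^s / s!`. -/

section AbsolutelyContinuous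

open Filter Topology

variable {E F : Type*} [NormedAddCommGroup E] [NormedAddCommGroup F]

theorem AbsContOn.absolutelyContinuousOnInterval {f : ℝ → E} {S : Set ℝ} {x y : ℝ}
    (hf : AbsContOn f S) (hxy : uIcc x y ⊆ S) : AbsolutelyContinuousOnInterval f x y := by
  rw [absolutelyContinuousOnInterval_iff]
  intro ε hε
  obtain ⟨δ, hδ, hsum⟩ := hf ε hε
  refine ⟨δ, hδ, ?_⟩
  rintro ⟨N, I⟩ ⟨hmem, hdisj⟩ hlen
  have hdist : ∀ g : ℝ → E, ∀ i, ‖g (max (I i).1 (I i).2) - g (min (I i).1 (I i).2)‖ =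
      dist (g (I i).1) (g (I i).2) := by
    intro g i
    rcases le_total (I i).1 (I i).2 with h | h
    · rw [max_eq_right h, min_eq_left h, dist_eq_norm']
    · rw [max_eq_left h, min_eq_right h, dist_eq_norm]
  simp only [Finset.sum_range, Real.dist_eq, ← max_sub_min_eq_abs'] at hlen ⊢
  simp only [← hdist]
  refine hsum N (fun i ↦ min (I i).1 (I i).2) (fun i ↦ max (I i).1 (I i).2)
    (fun i ↦ ⟨min_le_max, ?_⟩) (fun i j hij ↦ ?_) hlen
  · have hi := hmem i (Finset.mem_range.mpr i.2)
    exact (uIcc_subset_uIcc hi.1 hi.2).trans hxy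
  · exact (hdisj (by simp) (by simp) (Fin.val_ne_of_ne hij)).mono
      Ioo_subset_Ioc_self Ioo_subset_Ioc_self

theorem AbsContOn.comp_lipschitzWith {f : ℝ → E} {S : Set ℝ} {g : E → F} {K : NNReal}
    (hf : AbsContOn f S) (hg : LipschitzWith K g) : AbsContOn (g ∘ f) S := by
  intro ε hε
  obtain ⟨δ, hδ, hsum⟩ := hf (ε / (K + 1)) (by positivity)
  refine ⟨δ, hδ, fun N u v huv hdisj hlen ↦ ?_⟩
  calc ∑ i, ‖g (f (v i)) - g (f (u i))‖
      ≤ ∑ i, (K + 1) * ‖f (v i) - f (u i)‖ := by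
        refine Finset.sum_le_sum fun i _ ↦ (hg.norm_sub_le _ _).trans ?_
        gcongr
        exact le_add_of_nonneg_right zero_le_one
    _ = (K + 1) * ∑ i, ‖f (v i) - f (u i)‖ := by rw [Finset.mul_sum]
    _ < (K + 1) * (ε / (K + 1)) := by gcongr; exact hsum N u v huv hdisj hlen
    _ = ε := by field_simp

theorem AbsContOn.exists_eVariationOn_le {f : ℝ → E} {S : Set ℝ} [S.OrdConnected]
    (hf : AbsContOn f S) {ε : ℝ} (hε : 0 < ε) :
    ∃ δ > 0, ∀ T ⊆ S, ∀ c d, T ⊆ Icc c d → d - c < δ →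
      eVariationOn f T ≤ ENNReal.ofReal ε := by
  obtain ⟨δ, hδ, hsum⟩ := hf ε hε
  refine ⟨δ, hδ, fun T hTS c d hT hcd ↦ iSup_le fun ⟨N, u, hu, huT⟩ ↦ ?_⟩
  have hlen : ∑ i : Fin N, (u (i + 1) - u i) < δ := by
    rw [Fin.sum_univ_eq_sum_range (fun i ↦ u (i + 1) - u i), Finset.sum_range_sub]
    linarith [(hT (huT N)).2, (hT (huT 0)).1]
  have hdisj : ∀ i j : Fin N, i ≠ j →
      Disjoint (Ioo (u i) (u (i + 1))) (Ioo (u j) (u (j + 1))) := fun i j hij ↦ by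
    simpa using hu.pairwise_disjoint_on_Ioo_succ (Fin.val_ne_of_ne hij)
  have hle := hsum N (fun i ↦ u i) (fun i ↦ u (i + 1))
    (fun i ↦ ⟨hu (Nat.le_succ _), Set.Icc_subset S (hTS (huT _)) (hTS (huT _))⟩) hdisj hlen
  simp only [edist_dist, dist_eq_norm]
  rw [← ENNReal.ofReal_sum_of_nonneg fun _ _ ↦ norm_nonneg _]
  rw [Fin.sum_univ_eq_sum_range (fun i ↦ ‖f (u (i + 1)) - f (u i)‖)] at hle
  exact ENNReal.ofReal_le_ofReal hle.le

theorem AbsContOn.boundedVariationOn_Ioo {f : ℝ → E} {a b : ℝ} (hf : AbsContOn f (Ioo a b)) :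
    BoundedVariationOn f (Ioo a b) := by
  rcases le_or_gt b a with hba | hab
  · simp [Ioo_eq_empty_of_le hba, BoundedVariationOn.of_subsingleton]
  -- Near the endpoints absolute continuity bounds the variation by `1`; the rest is compact.
  obtain ⟨δ, hδ, hvar⟩ := hf.exists_eVariationOn_le one_pos
  set η := min (δ / 2) ((b - a) / 2)
  have hη : 0 < η := lt_min (by linarith) (by linarith)
  have hηδ : η < δ := (min_le_left _ _).trans_lt (by linarith)
  have hηab : η ≤ (b - a) / 2 := min_le_right _ _
  have hleft := hvar (Ioc a (a + η)) (fun x hx ↦ ⟨hx.1, by linarith [hx.2]⟩) a (a + η)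
    Ioc_subset_Icc_self (by linarith)
  have hright := hvar (Ico (b - η) b) (fun x hx ↦ ⟨by linarith [hx.1], hx.2⟩) (b - η) b
    Ico_subset_Icc_self (by linarith)
  have hmid : BoundedVariationOn f (Icc (a + η) (b - η)) := by
    have hle : a + η ≤ b - η := by linarith
    rw [← uIcc_of_le hle]
    refine (hf.absolutelyContinuousOnInterval ?_).boundedVariationOn
    rw [uIcc_of_le hle]
    exact Icc_subset_Ioo (by linarith) (by linarith)
  have hsplit : eVariationOn f (Ioo a b) = eVariationOn f (Ioc a (a + η)) +
      eVariationOn f (Icc (a + η) (b - η)) + eVariationOn f (Ico (b - η) b) := by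
    rw [← eVariationOn.union f (isGreatest_Ioc (by linarith)) (isLeast_Icc (by linarith)),
      Ioc_union_Icc_eq_Ioc (by linarith) (by linarith),
      ← eVariationOn.union f (isGreatest_Ioc (by linarith)) (isLeast_Ico (by linarith)),
      Ioc_union_Ico_eq_Ioo (by linarith) (by linarith)]
  rw [BoundedVariationOn, hsplit]
  exact ENNReal.add_ne_top.mpr ⟨ENNReal.add_ne_top.mpr
    ⟨ne_top_of_le_ne_top ENNReal.ofReal_ne_top hleft, hmid⟩,
    ne_top_of_le_ne_top ENNReal.ofReal_ne_top hright⟩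

theorem dist_le_abs_variationOnFromTo {α X : Type*} [LinearOrder α] [PseudoMetricSpace X]
    {f : α → X} {S : Set α} (hf : LocallyBoundedVariationOn f S) {x y : α} (hx : x ∈ S)
    (hy : y ∈ S) : dist (f x) (f y) ≤ |variationOnFromTo f S x y| := by
  rcases le_total x y with hxy | hyx
  · rw [variationOnFromTo.eq_of_le f S hxy, ENNReal.abs_toReal]
    exact (hf x y hx hy).dist_le ⟨hx, le_rfl, hxy⟩ ⟨hy, hxy, le_rfl⟩
  · rw [variationOnFromTo.eq_of_ge f S hyx, abs_neg, ENNReal.abs_toReal]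
    exact (hf y x hy hx).dist_le ⟨hx, hyx, le_rfl⟩ ⟨hy, le_rfl, hyx⟩

variable [NormedSpace ℝ E] [NormedSpace ℝ F]

theorem norm_deriv_le_norm_deriv_of_norm_sub_le {f : ℝ → E} {g : ℝ → F} {t : ℝ}
    (hg : DifferentiableAt ℝ g t) (hfg : ∀ᶠ y in 𝓝 t, ‖f y - f t‖ ≤ ‖g y - g t‖) :
    ‖deriv f t‖ ≤ ‖deriv g t‖ := by
  by_cases hf : DifferentiableAt ℝ f t
  · refine le_of_tendsto_of_tendsto (hasDerivAt_iff_tendsto_slope.mp hf.hasDerivAt).norm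
      (hasDerivAt_iff_tendsto_slope.mp hg.hasDerivAt).norm ?_
    filter_upwards [nhdsWithin_le_nhds hfg] with y hy
    simp only [slope_def_module, norm_smul]
    gcongr
  · simp [deriv_zero_of_not_differentiableAt hf]

theorem integrableOn_deriv_of_monotoneOn_Ioo {p : ℝ → ℝ} {a b : ℝ}
    (hp : MonotoneOn p (Ioo a b)) (hbelow : BddBelow (p '' Ioo a b))
    (habove : BddAbove (p '' Ioo a b)) : IntegrableOn (deriv p) (Ioo a b) := by
  rcases lt_or_ge b a with hba | hab
  · simp [Ioo_eq_empty_of_le hba.le]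
  obtain ⟨q, hq, hpq⟩ := hp.exists_monotone_extension hbelow habove
  have hq' : IntegrableOn (deriv q) (Ioo a b) :=
    (intervalIntegrable_iff_integrableOn_Ioo_of_le hab).mp
      (hq.monotoneOn _).intervalIntegrable_deriv
  exact hq'.congr_fun (hpq.symm.deriv isOpen_Ioo) measurableSet_Ioo

theorem integrableOn_norm_deriv_of_boundedVariationOn_Ioo [CompleteSpace E] {f : ℝ → E} {a b : ℝ}
    (hf : BoundedVariationOn f (Ioo a b)) : IntegrableOn (fun t ↦ ‖deriv f t‖) (Ioo a b) := by
  rcases (Ioo a b).eq_empty_or_nonempty with hempty | ⟨c, hc⟩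
  · simp [hempty]
  set p := variationOnFromTo f (Ioo a b) c
  have hp : MonotoneOn p (Ioo a b) :=
    variationOnFromTo.monotoneOn hf.locallyBoundedVariationOn hc
  have hbdd : ∀ t, |p t| ≤ (eVariationOn f (Ioo a b)).toReal := fun t ↦
    variationOnFromTo.abs_le_eVariationOn hf
  have hbelow : BddBelow (p '' Ioo a b) :=
    ⟨_, forall_mem_image.mpr fun t _ ↦ (abs_le.mp (hbdd t)).1⟩
  have habove : BddAbove (p '' Ioo a b) :=
    ⟨_, forall_mem_image.mpr fun t _ ↦ (abs_le.mp (hbdd t)).2⟩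
  refine (integrableOn_deriv_of_monotoneOn_Ioo hp hbelow habove).norm.mono'
    (aestronglyMeasurable_deriv f _).norm ?_
  filter_upwards [ae_restrict_mem measurableSet_Ioo,
    ae_restrict_of_ae hp.ae_differentiableWithinAt_of_mem] with t ht htp
  rw [norm_norm]
  refine norm_deriv_le_norm_deriv_of_norm_sub_le
    ((htp ht).differentiableAt (isOpen_Ioo.mem_nhds ht)) ?_
  filter_upwards [isOpen_Ioo.mem_nhds ht] with y hy
  rw [Real.norm_eq_abs, variationOnFromTo.sub_right hf.locallyBoundedVariationOn hc hy ht]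
  rw [← dist_eq_norm']
  exact dist_le_abs_variationOnFromTo hf.locallyBoundedVariationOn ht hy

theorem AbsContOn.ae_differentiableAt_Ioo [FiniteDimensional ℝ E] {f : ℝ → E} {a b : ℝ}
    (hf : AbsContOn f (Ioo a b)) : ∀ᵐ t, t ∈ Ioo a b → DifferentiableAt ℝ f t := by
  have hlbv := hf.boundedVariationOn_Ioo.locallyBoundedVariationOn
  filter_upwards [hlbv.ae_differentiableWithinAt_of_mem] with t ht hmem using
    (ht hmem).differentiableAt (isOpen_Ioo.mem_nhds hmem)

theorem AbsContOn.norm_sub_le_integral_norm_deriv_of_le [FiniteDimensional ℝ E] {f : ℝ → E}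
    {a b x y : ℝ} (hf : AbsContOn f (Ioo a b)) (hx : x ∈ Ioo a b) (hy : y ∈ Ioo a b)
    (hxy : x ≤ y) : ‖f y - f x‖ ≤ ∫ t in Ioo a b, ‖deriv f t‖ := by
  have := FiniteDimensional.complete ℝ E
  -- A norming functional reduces the claim to the fundamental theorem for real functions.
  obtain ⟨l, hl_norm, hl⟩ := exists_dual_vector'' ℝ (f y - f x)
  have hsub : uIcc x y ⊆ Ioo a b := OrdConnected.uIcc_subset inferInstance hx hy
  have hIoc : Ioc x y ⊆ Ioo a b := Ioc_subset_Icc_self.trans (uIcc_of_le hxy ▸ hsub)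
  have hlf : AbsolutelyContinuousOnInterval (l ∘ f) x y :=
    (hf.comp_lipschitzWith l.lipschitz).absolutelyContinuousOnInterval hsub
  have hint := integrableOn_norm_deriv_of_boundedVariationOn_Ioo hf.boundedVariationOn_Ioo
  have hderiv : ∀ᵐ t, t ∈ Ioo a b → deriv (l ∘ f) t ≤ ‖deriv f t‖ := by
    filter_upwards [hf.ae_differentiableAt_Ioo] with t ht hmem
    rw [(l.hasFDerivAt.comp_hasDerivAt t (ht hmem).hasDerivAt).deriv]
    exact (le_abs_self _).trans (l.le_of_opNorm_le hl_norm _ |>.trans_eq (one_mul _))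
  calc ‖f y - f x‖ = ∫ t in x..y, deriv (l ∘ f) t := by
        rw [hlf.integral_deriv_eq_sub, Function.comp_apply, Function.comp_apply, ← map_sub, hl]
        rfl
    _ = ∫ t in Ioc x y, deriv (l ∘ f) t := intervalIntegral.integral_of_le hxy
    _ ≤ ∫ t in Ioc x y, ‖deriv f t‖ := by
        refine setIntegral_mono_on_ae ?_ (hint.mono_set hIoc) measurableSet_Ioc ?_
        · exact (intervalIntegrable_iff_integrableOn_Ioc_of_le hxy).mp hlf.intervalIntegrable_deriv
        · filter_upwards [hderiv] with t ht hmem using ht (hIoc hmem)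
    _ ≤ ∫ t in Ioo a b, ‖deriv f t‖ :=
        setIntegral_mono_set hint (Eventually.of_forall fun _ ↦ norm_nonneg _) hIoc.eventuallyLE

theorem AbsContOn.norm_sub_le_integral_norm_deriv [FiniteDimensional ℝ E] {f : ℝ → E}
    {a b x y : ℝ} (hf : AbsContOn f (Ioo a b)) (hx : x ∈ Ioo a b) (hy : y ∈ Ioo a b) :
    ‖f y - f x‖ ≤ ∫ t in Ioo a b, ‖deriv f t‖ := by
  rcases le_total x y with hxy | hyx
  · exact hf.norm_sub_le_integral_norm_deriv_of_le hx hy hxy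
  · rw [norm_sub_rev]
    exact hf.norm_sub_le_integral_norm_deriv_of_le hy hx hyx

end AbsolutelyContinuous

section Taylor

variable {E : Type*} [NormedAddCommGroup E] [NormedSpace ℝ E]

theorem norm_sub_taylorWithinEval_le_of_lipschitzOnWith {f : ℝ → E} {n : ℕ} {s : Set ℝ}
    {K : NNReal} (hconv : Convex ℝ s) (hs : UniqueDiffOn ℝ s) (hf : ContDiffOn ℝ n f s)
    (hLip : LipschitzOnWith K (iteratedDerivWithin n f s) s) {t x : ℝ} (ht : t ∈ s)
    (hx : x ∈ s) : ‖f x - taylorWithinEval f n s t x‖ ≤ K * |x - t| ^ (n + 1) := by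
  induction n generalizing f x with
  | zero =>
    simpa [taylor_within_zero_eval, dist_eq_norm] using hLip.dist_le_mul x hx t ht
  | succ n ih =>
    have hdiff := (contDiffOn_succ_iff_derivWithin (n := n) hs).mp (by exact_mod_cast hf)
    have hLip' : LipschitzOnWith K (iteratedDerivWithin n (derivWithin f s) s) s := by
      intro y hy z hz
      simpa only [iteratedDerivWithin_succ'] using hLip hy hz
    have hseg : uIcc t x ⊆ s := hconv.ordConnected.uIcc_subset ht hx
    have hderiv : ∀ z ∈ uIcc t x,
        HasDerivWithinAt (fun z ↦ f z - taylorWithinEval f (n + 1) s t z)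
          (derivWithin f s z - taylorWithinEval (derivWithin f s) n s t z) (uIcc t x) z :=
      fun z hz ↦ ((hdiff.1 z (hseg hz)).hasDerivWithinAt.mono hseg).sub
        (hasDerivAt_taylorWithinEval_succ f n).hasDerivWithinAt
    have hbound : ∀ z ∈ uIcc t x,
        ‖derivWithin f s z - taylorWithinEval (derivWithin f s) n s t z‖ ≤
          K * |x - t| ^ (n + 1) := fun z hz ↦
      (ih hdiff.2.2 hLip' (hseg hz)).trans <| by
        gcongr ?_ * ?_ ^ _
        exact abs_sub_left_of_mem_uIcc hz
    have hmvt := (convex_uIcc t x).norm_image_sub_le_of_norm_hasDerivWithin_le hderiv hbound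
      left_mem_uIcc right_mem_uIcc
    simpa [taylorWithinEval_self, pow_succ, mul_assoc] using hmvt

end Taylor

section Interpolation

variable {E : Type*} [NormedAddCommGroup E]

theorem exists_norm_le_mul_of_norm_sum_pow_smul_le {𝕜 : Type*} [NormedField 𝕜]
    [NormedSpace 𝕜 E] {n : ℕ} {v : Fin n → 𝕜} (hv : Function.Injective v) :
    ∃ D : ℝ, 0 ≤ D ∧ ∀ (c : Fin n → E) (Q : ℝ), (∀ m, ‖∑ i : Fin n, v m ^ (i : ℕ) • c i‖ ≤ Q) →
      ∀ i, ‖c i‖ ≤ D * Q := by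
  set W := (Matrix.vandermonde v)⁻¹
  have hW : W * Matrix.vandermonde v = 1 :=
    Matrix.nonsing_inv_mul _ (Matrix.det_vandermonde_ne_zero_iff.mpr hv).isUnit
  refine ⟨∑ i, ∑ m, ‖W i m‖, by positivity, fun c Q hQ i ↦ ?_⟩
  have hQ0 : 0 ≤ Q := (norm_nonneg _).trans (hQ i)
  have hinv : c i = ∑ m, W i m • ∑ l : Fin n, v m ^ (l : ℕ) • c l := by
    calc c i = ∑ l, (W * Matrix.vandermonde v) i l • c l := by
          simp [hW, Matrix.one_apply, ite_smul]
      _ = ∑ m, W i m • ∑ l : Fin n, v m ^ (l : ℕ) • c l := by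
          simp only [Matrix.mul_apply, Matrix.vandermonde_apply, Finset.sum_smul, Finset.smul_sum,
            mul_smul]
          exact Finset.sum_comm
  calc ‖c i‖ ≤ ∑ m, ‖W i m‖ * Q := by
        rw [hinv]
        refine norm_sum_le_of_le _ fun m _ ↦ (norm_smul_le _ _).trans ?_
        gcongr
        exact hQ m
    _ = (∑ m, ‖W i m‖) * Q := by rw [Finset.sum_mul]
    _ ≤ (∑ i, ∑ m, ‖W i m‖) * Q := by
        gcongr ?_ * Q
        exact Finset.single_le_sum (f := fun i ↦ ∑ m, ‖W i m‖) (fun _ _ ↦ by positivity)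
          (Finset.mem_univ i)

variable [NormedSpace ℝ E]

theorem exists_norm_pow_div_factorial_smul_iteratedDerivWithin_le (n : ℕ) :
    ∃ D : ℝ, 0 ≤ D ∧ ∀ {f : ℝ → E} {s : Set ℝ} {K : NNReal} {P t y : ℝ}, Convex ℝ s →
      UniqueDiffOn ℝ s → ContDiffOn ℝ n f s →
      LipschitzOnWith K (iteratedDerivWithin n f s) s → (∀ x ∈ s, ‖f x‖ ≤ P) → t ∈ s →
      t + y ∈ s → ∀ i ≤ n, ‖(y ^ i / i.factorial) • iteratedDerivWithin i f s t‖ ≤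
        D * (P + K * |y| ^ (n + 1)) := by
  have hnode : Function.Injective fun m : Fin (n + 1) ↦ (m : ℝ) / (n + 1) := fun l m hlm ↦ by
    have hne : (n : ℝ) + 1 ≠ 0 := Nat.cast_add_one_ne_zero n
    simpa [div_left_inj' hne, Fin.val_inj] using hlm
  obtain ⟨D, hD, hcoeff⟩ := exists_norm_le_mul_of_norm_sum_pow_smul_le (E := E) hnode
  refine ⟨D, hD, fun {f s K P t y} hconv hs hf hLip hP ht hty i hi ↦ ?_⟩
  refine hcoeff (fun i ↦ (y ^ (i : ℕ) / (i : ℕ).factorial) • iteratedDerivWithin i f s t) _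
    (fun m ↦ ?_) ⟨i, Nat.lt_succ_of_le hi⟩
  set v : ℝ := m / (n + 1)
  have hv0 : 0 ≤ v := by positivity
  have hv1 : v ≤ 1 := (div_le_one (by positivity)).mpr (by exact_mod_cast m.2.le)
  have hx : t + v * y ∈ s := by
    simpa using hconv.add_smul_mem ht hty ⟨hv0, hv1⟩
  have htaylor : ∑ i : Fin (n + 1), v ^ (i : ℕ) •
      (y ^ (i : ℕ) / (i : ℕ).factorial) • iteratedDerivWithin i f s t =
        taylorWithinEval f n s t (t + v * y) := by
    rw [taylor_within_apply, Finset.sum_range]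
    refine Finset.sum_congr rfl fun i _ ↦ ?_
    rw [smul_smul, add_sub_cancel_left, mul_pow]
    ring_nf
  have hrem := norm_sub_taylorWithinEval_le_of_lipschitzOnWith hconv hs hf hLip ht hx
  rw [htaylor]
  calc ‖taylorWithinEval f n s t (t + v * y)‖
      ≤ ‖f (t + v * y)‖ + ‖f (t + v * y) - taylorWithinEval f n s t (t + v * y)‖ :=
        norm_le_insert _ _
    _ ≤ P + K * |t + v * y - t| ^ (n + 1) := add_le_add (hP _ hx) hrem
    _ ≤ P + K * |y| ^ (n + 1) := by
        gcongr _ + _ * ?_ ^ _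
        rw [add_sub_cancel_left, abs_mul, abs_of_nonneg hv0]
        exact mul_le_of_le_one_left (abs_nonneg y) hv1

theorem exists_abs_eq_and_add_mem_Ioo {a b t : ℝ} (ht : t ∈ Ioo a b) :
    ∃ y, |y| = (b - a) / 3 ∧ t + y ∈ Ioo a b := by
  have hab : a < b := ht.1.trans ht.2
  have hpos : 0 < (b - a) / 3 := by linarith
  rcases le_total t ((a + b) / 2) with h | h
  · exact ⟨(b - a) / 3, abs_of_pos hpos, by constructor <;> linarith [ht.1]⟩
  · exact ⟨-((b - a) / 3), by rw [abs_neg, abs_of_pos hpos], by constructor <;> linarith [ht.2]⟩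

theorem exists_norm_iteratedDerivWithin_Ioo_le (n : ℕ) :
    ∃ C : ℝ, 0 ≤ C ∧ ∀ {f : ℝ → E} {a b : ℝ} {K : NNReal} {P : ℝ},
      ContDiffOn ℝ n f (Ioo a b) →
      LipschitzOnWith K (iteratedDerivWithin n f (Ioo a b)) (Ioo a b) →
      (∀ x ∈ Ioo a b, ‖f x‖ ≤ P) → ∀ i ≤ n, ∀ t ∈ Ioo a b,
      ‖iteratedDerivWithin i f (Ioo a b) t‖ ≤
        C * ((b - a) ^ i)⁻¹ * (P + K * (b - a) ^ (n + 1)) := by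
  obtain ⟨D, hD, hcoeff⟩ :=
    exists_norm_pow_div_factorial_smul_iteratedDerivWithin_le (E := E) n
  refine ⟨n.factorial * 3 ^ n * D, by positivity,
    fun {f a b K P} hf hLip hP i hi t ht ↦ ?_⟩
  have hab : 0 < b - a := sub_pos.mpr (ht.1.trans ht.2)
  obtain ⟨y, hy, hty⟩ := exists_abs_eq_and_add_mem_Ioo ht
  have hterm := hcoeff (convex_Ioo a b) (uniqueDiffOn_Ioo a b) hf hLip hP ht hty i hi
  rw [norm_smul, norm_div, norm_pow, Real.norm_eq_abs, hy, Real.norm_natCast] at hterm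
  calc ‖iteratedDerivWithin i f (Ioo a b) t‖
      = i.factorial * 3 ^ i * ((b - a) ^ i)⁻¹ *
          (((b - a) / 3) ^ i / i.factorial * ‖iteratedDerivWithin i f (Ioo a b) t‖) := by
        rw [div_pow]
        field_simp
    _ ≤ n.factorial * 3 ^ n * ((b - a) ^ i)⁻¹ *
          (D * (P + K * (b - a) ^ (n + 1))) := by
        gcongr ?_ * ?_ * _ * ?_
        · exact_mod_cast Nat.factorial_le hi
        · exact pow_le_pow_right₀ (by norm_num) hi
        · refine hterm.trans ?_
          gcongr
          linarith
    _ = n.factorial * 3 ^ n * D * ((b - a) ^ i)⁻¹ * (P + K * (b - a) ^ (n + 1)) := by ring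

end Interpolation

section HolderConst

variable {E : Type*} [NormedAddCommGroup E]

theorem holderConst_nonneg (α : ℝ) (S : Set ℝ) (g : ℝ → E) : 0 ≤ HolderConst α S g :=
  Real.sSup_nonneg <| by
    rintro _ ⟨x, -, y, -, -, rfl⟩
    positivity

theorem norm_sub_le_holderConst_mul_rpow {g : ℝ → E} {S : Set ℝ} {α L : ℝ}
    (hL : ∀ x ∈ S, ∀ y ∈ S, ‖g x - g y‖ ≤ L * |x - y| ^ α) {x y : ℝ} (hx : x ∈ S)
    (hy : y ∈ S) : ‖g x - g y‖ ≤ HolderConst α S g * |x - y| ^ α := by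
  rcases eq_or_ne x y with rfl | hxy
  · have := holderConst_nonneg α S g
    rw [sub_self, norm_zero]
    positivity
  rw [← div_le_iff₀ (by have := abs_pos.mpr (sub_ne_zero.mpr hxy); positivity)]
  refine le_csSup ⟨L, ?_⟩ ⟨x, hx, y, hy, hxy, rfl⟩
  rintro _ ⟨z, hz, w, hw, hzw, rfl⟩
  rw [div_le_iff₀ (by have := abs_pos.mpr (sub_ne_zero.mpr hzw); positivity)]
  exact hL z hz w hw

variable [NormedSpace ℝ E] {d : ℕ → ℝ → E} {k : ℕ} {S T : Set ℝ}

theorem MemCk1.mono (hd : MemCk1 d k T) (hST : S ⊆ T) : MemCk1 d k S :=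
  ⟨fun i hi x hx ↦ (hd.1 i hi x (hST hx)).mono hST,
    hd.2.imp fun _ hL x hx y hy ↦ hL x (hST hx) y (hST hy)⟩

theorem MemCk1.lipschitzOnWith (hd : MemCk1 d k S) :
    LipschitzOnWith (HolderConst 1 S (d k)).toNNReal (d k) S := by
  obtain ⟨L, hL⟩ := hd.2
  refine LipschitzOnWith.of_dist_le_mul fun x hx y hy ↦ ?_
  rw [Real.coe_toNNReal _ (holderConst_nonneg 1 S (d k)), dist_eq_norm, Real.dist_eq]
  simpa using norm_sub_le_holderConst_mul_rpow (α := 1) (by simpa using hL) hx hy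

theorem DerivChain.eqOn_iteratedDerivWithin (hd : DerivChain d k S) (hS : UniqueDiffOn ℝ S)
    {i : ℕ} (hi : i ≤ k) : EqOn (iteratedDerivWithin i (d 0) S) (d i) S := by
  induction i with
  | zero => simp [EqOn]
  | succ i ih =>
    intro x hx
    have hprev := ih (Nat.le_of_succ_le hi)
    rw [iteratedDerivWithin_succ, derivWithin_congr hprev (hprev hx)]
    exact (hd i hi x hx).derivWithin (hS x hx)

theorem MemCk1.contDiffOn (hd : MemCk1 d k S) (hS : UniqueDiffOn ℝ S) :
    ContDiffOn ℝ k (d 0) S := by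
  refine contDiffOn_of_continuousOn_differentiableOn_deriv (fun i hi ↦ ?_) (fun i hi ↦ ?_)
  · have hi : i ≤ k := by exact_mod_cast hi
    refine ContinuousOn.congr ?_ (hd.1.eqOn_iteratedDerivWithin hS hi)
    rcases hi.eq_or_lt with rfl | hlt
    · exact hd.lipschitzOnWith.continuousOn
    · exact fun x hx ↦ (hd.1 i hlt x hx).continuousWithinAt
  · have hi : i < k := by exact_mod_cast hi
    exact DifferentiableOn.congr (fun x hx ↦ (hd.1 i hi x hx).differentiableWithinAt)
      (hd.1.eqOn_iteratedDerivWithin hS hi.le)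

theorem exists_norm_le_of_memCk1_Ioo (k : ℕ) :
    ∃ C : ℝ, 0 ≤ C ∧ ∀ {d : ℕ → ℝ → E} {a b P : ℝ}, MemCk1 d k (Ioo a b) →
      (∀ t ∈ Ioo a b, ‖d 0 t‖ ≤ P) → ∀ i ≤ k, ∀ t ∈ Ioo a b,
      ‖d i t‖ ≤ C * ((b - a) ^ i)⁻¹ *
        (P + HolderConst 1 (Ioo a b) (d k) * (b - a) ^ (k + 1)) := by
  obtain ⟨C, hC, hinterp⟩ := exists_norm_iteratedDerivWithin_Ioo_le (E := E) k
  refine ⟨C, hC, fun {d a b P} hd hP i hi t ht ↦ ?_⟩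
  have heq {i : ℕ} (hi : i ≤ k) := hd.1.eqOn_iteratedDerivWithin (uniqueDiffOn_Ioo a b) hi
  have hLip : LipschitzOnWith (HolderConst 1 (Ioo a b) (d k)).toNNReal
      (iteratedDerivWithin k (d 0) (Ioo a b)) (Ioo a b) := fun x hx y hy ↦ by
    rw [heq le_rfl hx, heq le_rfl hy]
    exact hd.lipschitzOnWith hx hy
  have hle := hinterp (hd.contDiffOn (uniqueDiffOn_Ioo a b)) hLip hP i hi t ht
  rwa [heq hi ht, Real.coe_toNNReal _ (holderConst_nonneg _ _ _)] at hle

end HolderConst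

section Smallness

theorem mul_add_le_of_sup'_mul_add_sum_le {ι : Type*} {s : Finset ι} {hs : s.Nonempty}
    {w g : ι → ℝ} {h M : ℝ} (hh : 0 ≤ h) (hg : ∀ i ∈ s, 0 ≤ g i)
    (hle : s.sup' hs w * h + ∑ i ∈ s, g i ≤ M) {i : ι} (hi : i ∈ s) : w i * h + g i ≤ M := by
  refine le_trans ?_ hle
  gcongr
  · exact Finset.le_sup' w hi
  · exact Finset.single_le_sum hg hi

theorem mul_pow_le_pow_mul_pow_of_rpow_mul_le {H A B h : ℝ} {n j : ℕ} (hn : n ≠ 0) (hH : 0 ≤ H)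
    (hA : 0 < A) (hh : 0 ≤ h)
    (hsmall : H ^ (n : ℝ)⁻¹ * A ^ (((n : ℝ) - j) / n) * h ≤ B * A) :
    H * h ^ n ≤ B ^ n * A ^ j := by
  have hn' : (n : ℝ) ≠ 0 := Nat.cast_ne_zero.mpr hn
  have hApow : (A ^ (((n : ℝ) - j) / n)) ^ n = A ^ n / A ^ j := by
    rw [← rpow_mul_natCast hA.le, div_mul_cancel₀ _ hn', rpow_sub hA, rpow_natCast, rpow_natCast]
  have hpow : H * (A ^ n / A ^ j) * h ^ n ≤ B ^ n * A ^ n := by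
    calc H * (A ^ n / A ^ j) * h ^ n
        = (H ^ (n : ℝ)⁻¹ * A ^ (((n : ℝ) - j) / n) * h) ^ n := by
          rw [mul_pow, mul_pow, hApow, rpow_inv_natCast_pow hH hn]
      _ ≤ (B * A) ^ n := by gcongr
      _ = B ^ n * A ^ n := mul_pow _ _ _
  calc H * h ^ n = H * (A ^ n / A ^ j) * h ^ n * (A ^ j / A ^ n) := by field_simp
    _ ≤ B ^ n * A ^ n * (A ^ j / A ^ n) := by gcongr
    _ = B ^ n * A ^ j := by field_simp

variable {E F : Type*} [NormedAddCommGroup E] [NormedSpace ℝ E] [NormedAddCommGroup F]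
  [NormedSpace ℝ F] [FiniteDimensional ℝ F]

theorem AbsContOn.norm_le_one_add_mul {r : ℝ → F} {a b t₀ t A B : ℝ}
    (hr : AbsContOn r (Ioo a b)) (ht₀ : t₀ ∈ Ioo a b) (hA : ‖r t₀‖ ≤ A)
    (hint : ∫ t in Ioo a b, ‖deriv r t‖ ≤ B * A) (ht : t ∈ Ioo a b) :
    ‖r t‖ ≤ (1 + B) * A := by
  linarith [norm_le_insert' (r t) (r t₀), hr.norm_sub_le_integral_norm_deriv ht₀ ht]

theorem exists_norm_le_and_holderConst_le_of_norm_pow_eq {n : ℕ} (hn : n ≠ 0) {B : ℝ}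
    (hB : 0 ≤ B) :
    ∃ C : ℝ, 0 < C ∧ ∀ {a b t₀ A : ℝ} {j : ℕ} {d : ℕ → ℝ → E} {r : ℝ → F}, j ≤ n →
      MemCk1 d (n - 1) (Ioo a b) → AbsContOn r (Ioo a b) →
      (∀ t ∈ Ioo a b, ‖r t‖ ^ j = ‖d 0 t‖) → t₀ ∈ Ioo a b → 0 < A → ‖r t₀‖ ≤ A →
      HolderConst 1 (Ioo a b) (d (n - 1)) ^ (n : ℝ)⁻¹ * A ^ (((n : ℝ) - j) / n) * (b - a) ≤
        B * A →
      ∫ t in Ioo a b, ‖deriv r t‖ ≤ B * A →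
      (∀ s ≤ n - 1, ∀ t ∈ Ioo a b, ‖d s t‖ ≤ C * ((b - a) ^ s)⁻¹ * A ^ j) ∧
        HolderConst 1 (Ioo a b) (d (n - 1)) ≤ C * ((b - a) ^ n)⁻¹ * A ^ j := by
  obtain ⟨C₀, hC₀, hinterp⟩ := exists_norm_le_of_memCk1_Ioo (E := E) (n - 1)
  refine ⟨(C₀ + 1) * ((1 + B) ^ n + B ^ n), by positivity,
    fun {a b t₀ A j d r} hj hd hr hrd ht₀ hA hrA hsmall hint ↦ ?_⟩
  have hab : 0 < b - a := sub_pos.mpr (ht₀.1.trans ht₀.2)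
  have hH : HolderConst 1 (Ioo a b) (d (n - 1)) * (b - a) ^ n ≤ B ^ n * A ^ j :=
    mul_pow_le_pow_mul_pow_of_rpow_mul_le hn (holderConst_nonneg _ _ _) hA hab.le hsmall
  have hsup : ∀ t ∈ Ioo a b, ‖d 0 t‖ ≤ (1 + B) ^ n * A ^ j := fun t ht ↦
    calc ‖d 0 t‖ = ‖r t‖ ^ j := (hrd t ht).symm
      _ ≤ ((1 + B) * A) ^ j := by gcongr; exact hr.norm_le_one_add_mul ht₀ hrA hint ht
      _ = (1 + B) ^ j * A ^ j := mul_pow _ _ _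
      _ ≤ (1 + B) ^ n * A ^ j := by gcongr; linarith
  constructor
  · intro s hs t ht
    have hle := hinterp hd hsup s hs t ht
    rw [Nat.sub_add_cancel (Nat.one_le_iff_ne_zero.mpr hn)] at hle
    calc ‖d s t‖ ≤ C₀ * ((b - a) ^ s)⁻¹ * ((1 + B) ^ n * A ^ j + B ^ n * A ^ j) :=
          hle.trans (by gcongr)
      _ = C₀ * (((1 + B) ^ n + B ^ n) * ((b - a) ^ s)⁻¹ * A ^ j) := by ring
      _ ≤ (C₀ + 1) * (((1 + B) ^ n + B ^ n) * ((b - a) ^ s)⁻¹ * A ^ j) := by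
          gcongr
          linarith
      _ = (C₀ + 1) * ((1 + B) ^ n + B ^ n) * ((b - a) ^ s)⁻¹ * A ^ j := by ring
  · have hBC : B ^ n ≤ (C₀ + 1) * ((1 + B) ^ n + B ^ n) :=
      (le_add_of_nonneg_left (by positivity)).trans
        (le_mul_of_one_le_left (by positivity) (by linarith))
    calc HolderConst 1 (Ioo a b) (d (n - 1)) ≤ B ^ n * A ^ j / (b - a) ^ n :=
          (le_div_iff₀ (by positivity)).mpr hH
      _ = B ^ n * ((b - a) ^ n)⁻¹ * A ^ j := by ring
      _ ≤ (C₀ + 1) * ((1 + B) ^ n + B ^ n) * ((b - a) ^ n)⁻¹ * A ^ j := by gcongr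

theorem derivative_bounds_after_smallness_general {n : ℕ} (hn : 2 ≤ n) {B : ℝ} (hB : 0 ≤ B) :
    ∃ C : ℝ, 0 < C ∧ ∀ {a b : ℝ} {d : ℕ → ℕ → ℝ → E} {r : ℕ → ℝ → F},
      (∀ j ∈ Finset.Icc 2 n, MemCk1 (d j) (n - 1) (Ioo a b)) →
      (∀ j ∈ Finset.Icc 2 n, AbsContOn (r j) (Ioo a b)) →
      (∀ j ∈ Finset.Icc 2 n, ∀ t ∈ Ioo a b, ‖r j t‖ ^ j = ‖d j 0 t‖) →
      ∀ t₀ ∈ Ioo a b, ∀ k ∈ Finset.Icc 2 n,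
      (∀ j ∈ Finset.Icc 2 n, ‖d j 0 t₀‖ ^ (j : ℝ)⁻¹ ≤ ‖d k 0 t₀‖ ^ (k : ℝ)⁻¹) →
      d k 0 t₀ ≠ 0 →
      (Finset.Icc 2 n).sup' (Finset.nonempty_Icc.mpr hn)
          (fun j ↦ HolderConst 1 (Ioo a b) (d j (n - 1)) ^ (n : ℝ)⁻¹ *
            ‖d k 0 t₀‖ ^ (((n : ℝ) - j) / (k * n))) * (b - a) +
        ∑ j ∈ Finset.Icc 2 n, ∫ t in Ioo a b, ‖deriv (r j) t‖ ≤
        B * ‖d k 0 t₀‖ ^ (k : ℝ)⁻¹ →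
      ∀ j ∈ Finset.Icc 2 n,
        (∀ s ≤ n - 1, ∀ t ∈ Ioo a b,
          ‖d j s t‖ ≤ C * ((b - a) ^ s)⁻¹ * ‖d k 0 t₀‖ ^ ((j : ℝ) / k)) ∧
        HolderConst 1 (Ioo a b) (d j (n - 1)) ≤
          C * ((b - a) ^ n)⁻¹ * ‖d k 0 t₀‖ ^ ((j : ℝ) / k) := by
  obtain ⟨C, hC, hsingle⟩ := exists_norm_le_and_holderConst_le_of_norm_pow_eq (E := E) (F := F)
    (Nat.ne_zero_of_lt hn) hB
  refine ⟨C, hC, fun {a b d r} hd hr hrd t₀ ht₀ k _ hmax hne hsmall j hj ↦ ?_⟩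
  set X := ‖d k 0 t₀‖
  have hX : 0 < X := norm_pos_iff.mpr hne
  have hab : 0 < b - a := sub_pos.mpr (ht₀.1.trans ht₀.2)
  have hjn := Finset.mem_Icc.mp hj
  have hint_nonneg : ∀ i, 0 ≤ ∫ t in Ioo a b, ‖deriv (r i) t‖ :=
    fun i ↦ integral_nonneg fun _ ↦ norm_nonneg _
  have hterm := mul_add_le_of_sup'_mul_add_sum_le hab.le (fun i _ ↦ hint_nonneg i) hsmall hj
  have hH := holderConst_nonneg 1 (Ioo a b) (d j (n - 1))
  have hexp : X ^ (((n : ℝ) - j) / (k * n)) = (X ^ (k : ℝ)⁻¹) ^ (((n : ℝ) - j) / n) := by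
    rw [← rpow_mul hX.le]
    ring_nf
  have hpow : X ^ ((j : ℝ) / k) = (X ^ (k : ℝ)⁻¹) ^ j := by
    rw [← rpow_mul_natCast hX.le, inv_mul_eq_div]
  have hroot : ‖r j t₀‖ ≤ X ^ (k : ℝ)⁻¹ := by
    simpa [← hrd j hj t₀ ht₀, pow_rpow_inv_natCast, Nat.ne_zero_of_lt hjn.1] using hmax j hj
  rw [hexp] at hterm
  rw [hpow]
  exact hsingle hjn.2 (hd j hj) (hr j hj) (hrd j hj) ht₀ (by positivity) hroot
    (le_of_add_le_of_nonneg_left hterm (hint_nonneg j))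
    (le_of_add_le_of_nonneg_right hterm (by positivity))

end Smallness

/-- **Lemma bounds2.** Under the dominance assumption and the smallness
assumption `M|I| + ∑_j ‖(ã_j^{1/j})'‖_{L¹(I)} ≤ B |ã_k(t₀)|^{1/k}`, the derivatives
satisfy `‖ã_j^{(s)}‖_∞ ≤ C(n) |I|^{-s} |ã_k(t₀)|^{j/k}` and
`Lip_I(ã_j^{(n-1)}) ≤ C(n) |I|^{-n} |ã_k(t₀)|^{j/k}`. -/
theorem derivative_bounds_after_smallness (n : ℕ) (hn : 2 ≤ n) :
    ∃ C : ℝ, 0 < C ∧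
      ∀ (a b : ℝ), a < b →
      ∀ d : ℕ → ℕ → ℝ → ℂ,
      (∀ j ∈ Finset.Icc 2 n, MemCk1 (d j) (n - 1) (Icc a b)) →
      ∀ r : ℕ → ℝ → ℂ,
      (∀ j ∈ Finset.Icc 2 n, AbsContOn (r j) (Ioo a b)) →
      (∀ j ∈ Finset.Icc 2 n, ∀ t ∈ Ioo a b, r j t ^ j = d j 0 t) →
      ∀ t₀ ∈ Ioo a b, ∀ k ∈ Finset.Icc 2 n,
      (∀ j ∈ Finset.Icc 2 n, ‖d j 0 t₀‖ ^ ((j : ℝ)⁻¹) ≤ ‖d k 0 t₀‖ ^ ((k : ℝ)⁻¹)) →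
      d k 0 t₀ ≠ 0 →
      ∀ B : ℝ, 0 < B → B < 1 / 3 →
      ((Finset.Icc 2 n).sup' (Finset.nonempty_Icc.mpr hn)
          (fun j => (HolderConst 1 (Ioo a b) (d j (n - 1))) ^ ((n : ℝ)⁻¹) *
            ‖d k 0 t₀‖ ^ (((n : ℝ) - (j : ℝ)) / ((k : ℝ) * (n : ℝ))))) * (b - a) +
        (∑ j ∈ Finset.Icc 2 n, ∫ t in Ioo a b, ‖deriv (r j) t‖) ≤
        B * ‖d k 0 t₀‖ ^ ((k : ℝ)⁻¹) →
      ∀ j ∈ Finset.Icc 2 n, ∀ s : ℕ, 1 ≤ s → s ≤ n - 1 →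
        (∀ t ∈ Ioo a b, ‖d j s t‖ ≤ C * ((b - a) ^ s)⁻¹ * ‖d k 0 t₀‖ ^ ((j : ℝ) / (k : ℝ))) ∧
        HolderConst 1 (Ioo a b) (d j (n - 1)) ≤
          C * ((b - a) ^ n)⁻¹ * ‖d k 0 t₀‖ ^ ((j : ℝ) / (k : ℝ)) := by
  obtain ⟨C, hC, hbound⟩ := derivative_bounds_after_smallness_general (E := ℂ) (F := ℂ) hn
    (B := 1 / 3) (by norm_num)
  refine ⟨C, hC, fun a b _ d hd r hr hrd t₀ ht₀ k hk hmax hne B _ hB hsmall j hj s _ hs ↦ ?_⟩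
  have hjbound := hbound (fun i hi ↦ (hd i hi).mono Ioo_subset_Icc_self) hr
    (fun i hi t ht ↦ by rw [← norm_pow, hrd i hi t ht]) t₀ ht₀ k hk hmax hne
    (hsmall.trans (by gcongr)) j hj
  exact ⟨hjbound.1 s hs, hjbound.2⟩
end
end

section
/- Let n ≥ 2 and 2 ≤ m ≤ n be integers, let C₀ > 0, and let 1 ≤ p < m/(m−1). There exists a constant C depending only on n, p, and C₀ with the following property. Let I ⊆ ℝ be a bounded open interval, A > 0, and for i = 2,…,m let b_i ∈ C^{n-1,1}(Ī, ℂ) satisfy ‖b_i^{(s)}‖_{L^∞(I)} ≤ C₀ |I|^{-s} A^i for all s = 1,…,n−1 and Lip_I(b_i^{(n-1)}) ≤ C₀ |I|^{-n} A^i. Then for each i and each continuous f_i : I → ℂ with f_i^i = b_i on I, the function f_i is absolutely continuous on I and ‖f_i'‖_{L^p(I)} ≤ C |I|^{-1+1/p} A. -/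
open Set MeasureTheory Real

noncomputable section

/-!
Let `β = f ^ k` and `q = p (1 - 1 / k)`. Where `f ≠ 0` we have `|f'| ≤ |β'| / |f| ^ (k - 1)`, hence
`|f'| ^ p ≤ |β'| ^ p |β| ^ (-q)`, and `f' = 0` almost everywhere on the zero set of `f`. The
hypothesis on `p` says `q < 1`, so that `|β'| ^ p |β| ^ (-q)` is integrable near a simple zero of
`β`. Passing to real and imaginary parts, `β` is replaced by a real function `v` of class
`C^{k-1,1}`, whose degenerate zeros have to be controlled.

Let `R(x)` be the natural scale of `v` at `x`, the maximum of `|v^{(s)}(x)| ^ (1 / (k - s))` over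
`s < k`. On the ball of radius `R(x) / (2k)` around `x` the natural scale stays comparable to
`R(x)`, and some `v^{(s)}` stays at least `R(x) ^ (k - s) / 2` in absolute value. If `s = 0`, the
integrand is bounded there. Otherwise `v', …, v^{(s)}` have boundedly many zeros, `v` is piecewise
injective, and the substitution `z = v(y)` turns the integral into one of `|z| ^ (-q)`. Averaging
these local bounds over all centres `x` gives the bound on the whole interval.

For the absolute continuity, `f` is differentiable off its zeros with integrable derivative, and it
has no increment between its first and its last zero in a given interval.
-/

open Filter Topology
open scoped ENNReal NNReal

section ChangeOfVariables

lemma setLIntegral_Ioc_zero_enorm_rpow_neg {q B : ℝ} (hq : q < 1) (hB : 0 ≤ B) :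
    ∫⁻ y in Ioc 0 B, ‖y‖ₑ ^ (-q) = ENNReal.ofReal (B ^ (1 - q) / (1 - q)) := by
  have hint := intervalIntegral.intervalIntegrable_rpow' (a := 0) (b := B) (r := -q) (by linarith)
  rw [intervalIntegrable_iff_integrableOn_Ioc_of_le hB] at hint
  have hval : ∫ y in Ioc 0 B, y ^ (-q) = B ^ (1 - q) / (1 - q) := by
    rw [← intervalIntegral.integral_of_le hB, integral_rpow (Or.inl (by linarith)),
      neg_add_eq_sub, zero_rpow (by linarith), sub_zero]
  rw [← hval, ofReal_integral_eq_lintegral_ofReal hint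
    (ae_restrict_of_forall_mem measurableSet_Ioc fun y hy ↦ rpow_nonneg hy.1.le _)]
  refine setLIntegral_congr_fun measurableSet_Ioc fun y hy ↦ ?_
  rw [enorm_eq_ofReal hy.1.le, ENNReal.ofReal_rpow_of_pos hy.1]

lemma setLIntegral_closedBall_zero_enorm_rpow_neg_le {q B : ℝ} (hq : q < 1) (hB : 0 ≤ B) :
    ∫⁻ y in Metric.closedBall (0 : ℝ) B, ‖y‖ₑ ^ (-q) ≤
      ENNReal.ofReal (2 / (1 - q)) * ENNReal.ofReal B ^ (1 - q) := by
  have hpos := setLIntegral_Ioc_zero_enorm_rpow_neg hq hB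
  have hneg : ∫⁻ y in Ico (-B) 0, ‖y‖ₑ ^ (-q) = ENNReal.ofReal (B ^ (1 - q) / (1 - q)) := by
    rw [← hpos]
    simpa using (Measure.measurePreserving_neg (volume : Measure ℝ)).setLIntegral_comp_preimage_emb
      (MeasurableEquiv.neg ℝ).measurableEmbedding (fun y ↦ ‖y‖ₑ ^ (-q)) (Ioc 0 B)
  have hball : Metric.closedBall (0 : ℝ) B ⊆ insert 0 (Ico (-B) 0 ∪ Ioc 0 B) := fun y hy ↦ by
    rw [mem_closedBall_zero_iff, Real.norm_eq_abs, abs_le] at hy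
    grind
  calc ∫⁻ y in Metric.closedBall (0 : ℝ) B, ‖y‖ₑ ^ (-q)
      ≤ ∫⁻ y in insert 0 (Ico (-B) 0 ∪ Ioc 0 B), ‖y‖ₑ ^ (-q) := lintegral_mono_set hball
    _ = ∫⁻ y in Ico (-B) 0 ∪ Ioc 0 B, ‖y‖ₑ ^ (-q) :=
        setLIntegral_congr (insert_ae_eq_self _ _)
    _ ≤ ENNReal.ofReal (B ^ (1 - q) / (1 - q)) + ENNReal.ofReal (B ^ (1 - q) / (1 - q)) :=
        (lintegral_union_le _ _ _).trans_eq (by rw [hneg, hpos])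
    _ = ENNReal.ofReal (2 / (1 - q)) * ENNReal.ofReal B ^ (1 - q) := by
        have : 0 < 1 - q := sub_pos.2 hq
        rw [ENNReal.ofReal_rpow_of_nonneg hB this.le, ← ENNReal.ofReal_mul (by positivity),
          ← ENNReal.ofReal_add (by positivity) (by positivity)]
        ring_nf

lemma injOn_of_hasDerivWithinAt_ne_zero {S : Set ℝ} (hS : Convex ℝ S) {g g' : ℝ → ℝ}
    (hg : ∀ x ∈ S, HasDerivWithinAt g (g' x) S x) (hg' : ∀ x ∈ S, g' x ≠ 0) : InjOn g S := by
  have hlt : ∀ x ∈ S, ∀ y ∈ S, x < y → g x ≠ g y := by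
    intro x hx y hy hxy hgxy
    have hsub : Icc x y ⊆ S := hS.ordConnected.out hx hy
    obtain ⟨z, hz, hz0⟩ := exists_hasDerivAt_eq_zero hxy
      (fun t ht ↦ (hg t (hsub ht)).continuousWithinAt.mono hsub) hgxy fun t ht ↦
        (hg t (hsub (Ioo_subset_Icc_self ht))).hasDerivAt
          (mem_of_superset (Icc_mem_nhds ht.1 ht.2) hsub)
    exact hg' z (hsub (Ioo_subset_Icc_self hz)) hz0
  intro x hx y hy hgxy
  rcases lt_trichotomy x y with h | h | h
  · exact absurd hgxy (hlt x hx y hy h)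
  · exact h
  · exact absurd hgxy.symm (hlt y hy x hx h)

lemma DerivChain.mono {E : Type*} [NormedAddCommGroup E] [NormedSpace ℝ E] {d : ℕ → ℝ → E}
    {j k : ℕ} {S T : Set ℝ} (h : DerivChain d k S) (hjk : j ≤ k) (hTS : T ⊆ S) :
    DerivChain d j T := fun i hi x hx ↦ (h i (hi.trans_le hjk) x (hTS hx)).mono hTS

/- If `v (s + 2)` has no zero, then `v (s + 1)` is injective and has at most one zero, at which `S`
is split in two; iterating, `v 0` is injective on each of at most `2 ^ s` intervals. -/
lemma DerivChain.setLIntegral_enorm_mul_comp_le {v : ℕ → ℝ → ℝ} {s : ℕ} {S T : Set ℝ}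
    (hv : DerivChain v (s + 1) S) (hS : Convex ℝ S) (hne : ∀ x ∈ S, v (s + 1) x ≠ 0)
    (hT : MapsTo (v 0) S T) (g : ℝ → ℝ≥0∞) :
    ∫⁻ x in S, ‖v 1 x‖ₑ * g (v 0 x) ≤ 2 ^ s * ∫⁻ y in T, g y := by
  induction s generalizing S with
  | zero =>
    have hinj := injOn_of_hasDerivWithinAt_ne_zero hS (hv 0 zero_lt_one) hne
    calc ∫⁻ x in S, ‖v 1 x‖ₑ * g (v 0 x)
        = ∫⁻ y in v 0 '' S, g y := by
          simp only [enorm_eq_ofReal_abs]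
          exact (lintegral_image_eq_lintegral_abs_deriv_mul hS.ordConnected.measurableSet
            (hv 0 zero_lt_one) hinj g).symm
      _ ≤ ∫⁻ y in T, g y := lintegral_mono_set hT.image_subset
      _ = 2 ^ 0 * ∫⁻ y in T, g y := by rw [pow_zero, one_mul]
  | succ s ih =>
    have hinj := injOn_of_hasDerivWithinAt_ne_zero hS (hv (s + 1) (Nat.lt_succ_self _)) hne
    have piece {S' : Set ℝ} (hS' : Convex ℝ S') (hsub : S' ⊆ S) (hne' : ∀ x ∈ S', v (s + 1) x ≠ 0) :
        ∫⁻ x in S', ‖v 1 x‖ₑ * g (v 0 x) ≤ 2 ^ s * ∫⁻ y in T, g y :=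
      ih (hv.mono (Nat.le_succ _) hsub) hS' hne' (hT.mono_left hsub)
    by_cases hz : ∃ z ∈ S, v (s + 1) z = 0
    · obtain ⟨z, hzS, hz⟩ := hz
      have hne' (x) (hx : x ∈ S) (hxz : x ≠ z) : v (s + 1) x ≠ 0 :=
        fun h ↦ hxz (hinj hx hzS (h.trans hz.symm))
      have hsplit : S ⊆ insert z (S ∩ Iio z ∪ S ∩ Ioi z) := by grind
      calc ∫⁻ x in S, ‖v 1 x‖ₑ * g (v 0 x)
          ≤ ∫⁻ x in insert z (S ∩ Iio z ∪ S ∩ Ioi z), ‖v 1 x‖ₑ * g (v 0 x) :=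
            lintegral_mono_set hsplit
        _ = ∫⁻ x in S ∩ Iio z ∪ S ∩ Ioi z, ‖v 1 x‖ₑ * g (v 0 x) :=
            setLIntegral_congr (insert_ae_eq_self _ _)
        _ ≤ 2 ^ s * (∫⁻ y in T, g y) + 2 ^ s * ∫⁻ y in T, g y :=
            (lintegral_union_le _ _ _).trans (add_le_add
              (piece (hS.inter (convex_Iio z)) inter_subset_left fun x hx ↦ hne' x hx.1 hx.2.ne)
              (piece (hS.inter (convex_Ioi z)) inter_subset_left fun x hx ↦ hne' x hx.1 hx.2.ne'))
        _ = 2 ^ (s + 1) * ∫⁻ y in T, g y := by rw [pow_succ]; ring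
    · push Not at hz
      exact (piece hS subset_rfl hz).trans
        (mul_le_mul_left (pow_le_pow_right₀ one_le_two (Nat.le_succ s)) _)

end ChangeOfVariables

section Scale

variable {E : Type*} [NormedAddCommGroup E]

/-- The natural scale at `x` of a function `v 0` with derivatives `v 1, v 2, …`: the least `r ≥ 0`
with `‖v s x‖ ≤ r ^ (k - s)` for all `s < k`. When `v (k - 1)` is `1`-Lipschitz it measures the
distance from `x` over which `v 0, …, v (k - 1)` do not change their size. -/
def naturalScale (k : ℕ) (v : ℕ → ℝ → E) (x : ℝ) : ℝ :=
  ⨆ s : Fin k, ‖v s x‖ ^ (((k - s : ℕ) : ℝ)⁻¹)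

variable {k : ℕ} {v : ℕ → ℝ → E} {x M : ℝ}

lemma naturalScale_nonneg : 0 ≤ naturalScale k v x :=
  Real.iSup_nonneg fun _ ↦ rpow_nonneg (norm_nonneg _) _

lemma norm_le_naturalScale_pow {s : ℕ} (hs : s < k) : ‖v s x‖ ≤ naturalScale k v x ^ (k - s) := by
  have h : ‖v s x‖ ^ (((k - s : ℕ) : ℝ)⁻¹) ≤ naturalScale k v x :=
    le_ciSup (f := fun s : Fin k ↦ ‖v s x‖ ^ (((k - s : ℕ) : ℝ)⁻¹)) (Set.finite_range _).bddAbove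
      ⟨s, hs⟩
  calc ‖v s x‖ = (‖v s x‖ ^ (((k - s : ℕ) : ℝ)⁻¹)) ^ (k - s) :=
        (rpow_inv_natCast_pow (norm_nonneg _) (Nat.sub_pos_of_lt hs).ne').symm
    _ ≤ naturalScale k v x ^ (k - s) :=
        pow_le_pow_left₀ (rpow_nonneg (norm_nonneg _) _) h _

lemma naturalScale_le (hM : 0 ≤ M) (h : ∀ s < k, ‖v s x‖ ≤ M ^ (k - s)) :
    naturalScale k v x ≤ M :=
  Real.iSup_le (fun s ↦ (rpow_le_rpow (norm_nonneg _) (h s s.2) (by positivity)).trans_eq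
    (pow_rpow_inv_natCast hM (Nat.sub_pos_of_lt s.2).ne')) hM

lemma exists_norm_eq_naturalScale_pow (hk : k ≠ 0) :
    ∃ s < k, ‖v s x‖ = naturalScale k v x ^ (k - s) := by
  have : NeZero k := ⟨hk⟩
  obtain ⟨s, hs⟩ := exists_eq_ciSup_of_finite (f := fun s : Fin k ↦ ‖v s x‖ ^ (((k - s : ℕ) : ℝ)⁻¹))
  refine ⟨s, s.2, ?_⟩
  rw [naturalScale, ← hs, rpow_inv_natCast_pow (norm_nonneg _) (Nat.sub_pos_of_lt s.2).ne']

lemma aemeasurable_naturalScale {μ : Measure ℝ}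
    (hv : ∀ s < k, AEStronglyMeasurable (v s) μ) : AEMeasurable (naturalScale k v) μ :=
  AEMeasurable.iSup fun s ↦ (hv s s.2).norm.aemeasurable.pow_const _

/-- The bounds that Taylor's formula asks of a function `d 0` of class `C^{k-1,1}` on `S`, with
derivatives `d 1, …, d (k - 1)` and Lipschitz constant `L` for the last of them. -/
structure HasLipDerivChain [NormedSpace ℝ E] (d : ℕ → ℝ → E) (k : ℕ) (L : ℝ) (S : Set ℝ) :
    Prop where
  derivChain : DerivChain d (k - 1) S
  norm_sub_le : ∀ x ∈ S, ∀ y ∈ S, ‖d (k - 1) x - d (k - 1) y‖ ≤ L * |x - y|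

namespace HasLipDerivChain

variable [NormedSpace ℝ E] {S : Set ℝ} {s : ℕ} {y : ℝ}

/- Downward induction on `s`, starting from the Lipschitz bound on `v (k - 1)`. -/
lemma norm_sub_le_mul_naturalScale_pow (hv : HasLipDerivChain v k 1 S) (hS : Convex ℝ S)
    (hx : x ∈ S) (hy : y ∈ S) (hxy : |y - x| ≤ naturalScale k v x) (hs : s < k) :
    ‖v s y - v s x‖ ≤ (k - s) * naturalScale k v x ^ (k - s - 1) * |y - x| := by
  set R := naturalScale k v x
  have hR : 0 ≤ R := naturalScale_nonneg
  induction hj : k - s - 1 generalizing s y with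
  | zero =>
    obtain rfl : s = k - 1 := by omega
    simpa [Nat.cast_pred (Nat.zero_lt_of_lt hs)] using hv.norm_sub_le y hy x hx
  | succ j ih =>
    have hks : k - (s + 1) = j + 1 := by omega
    have hball : Convex ℝ (S ∩ Metric.closedBall x |y - x|) :=
      hS.inter (convex_closedBall _ _)
    have hderiv : ∀ z ∈ S ∩ Metric.closedBall x |y - x|,
        ‖v (s + 1) z‖ ≤ (k - s) * R ^ (j + 1) := by
      rintro z ⟨hzS, hzx⟩
      rw [Metric.mem_closedBall, Real.dist_eq] at hzx
      have hzR : |z - x| ≤ R := hzx.trans hxy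
      have hx1 : ‖v (s + 1) x‖ ≤ R ^ (j + 1) := hks ▸ norm_le_naturalScale_pow (by omega)
      calc ‖v (s + 1) z‖ ≤ ‖v (s + 1) z - v (s + 1) x‖ + ‖v (s + 1) x‖ := norm_le_norm_sub_add _ _
        _ ≤ (k - (s + 1 : ℕ)) * R ^ j * |z - x| + R ^ (j + 1) :=
            add_le_add (ih hzS (by omega) hzR (by omega)) hx1
        _ ≤ (k - (s + 1 : ℕ)) * R ^ j * R + R ^ (j + 1) := by
            have : (0 : ℝ) ≤ k - (s + 1 : ℕ) := sub_nonneg.2 (mod_cast Nat.succ_le_of_lt hs)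
            gcongr
        _ = (k - s) * R ^ (j + 1) := by push_cast; ring
    simpa [Real.norm_eq_abs] using hball.norm_image_sub_le_of_norm_hasDerivWithin_le
      (fun z hz ↦ (hv.derivChain s (by omega) z hz.1).mono inter_subset_left) hderiv
      ⟨hx, by simp⟩ ⟨hy, by simp [Real.dist_eq]⟩

lemma norm_sub_le_naturalScale_pow_div_two (hv : HasLipDerivChain v k 1 S) (hS : Convex ℝ S)
    (hx : x ∈ S) (hy : y ∈ S) (hxy : |y - x| ≤ naturalScale k v x / (2 * k)) (hs : s < k) :
    ‖v s y - v s x‖ ≤ naturalScale k v x ^ (k - s) / 2 := by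
  set R := naturalScale k v x
  have hR : 0 ≤ R := naturalScale_nonneg
  have hk : (1 : ℝ) ≤ k := mod_cast Nat.one_le_of_lt hs
  have hxyR : |y - x| ≤ R := hxy.trans (div_le_self hR (by linarith))
  calc ‖v s y - v s x‖
      ≤ (k - s) * R ^ (k - s - 1) * |y - x| :=
        hv.norm_sub_le_mul_naturalScale_pow hS hx hy hxyR hs
    _ ≤ k * R ^ (k - s - 1) * (R / (2 * k)) := by
        have : (0 : ℝ) ≤ s := s.cast_nonneg
        gcongr
        linarith
    _ = R ^ (k - s - 1) * R / 2 := by field_simp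
    _ = R ^ (k - s) / 2 := by rw [pow_sub_one_mul (Nat.sub_pos_of_lt hs).ne']

lemma norm_le_two_mul_naturalScale_pow (hv : HasLipDerivChain v k 1 S) (hS : Convex ℝ S)
    (hx : x ∈ S) (hy : y ∈ S) (hxy : |y - x| ≤ naturalScale k v x / (2 * k)) (hs : s < k) :
    ‖v s y‖ ≤ 2 * naturalScale k v x ^ (k - s) := by
  have hR : 0 ≤ naturalScale k v x ^ (k - s) := pow_nonneg naturalScale_nonneg _
  linarith [norm_le_norm_sub_add (v s y) (v s x), norm_le_naturalScale_pow (v := v) (x := x) hs,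
    hv.norm_sub_le_naturalScale_pow_div_two hS hx hy hxy hs]

lemma exists_naturalScale_pow_div_two_le_norm (hv : HasLipDerivChain v k 1 S) (hS : Convex ℝ S)
    (hx : x ∈ S) (hk : k ≠ 0) :
    ∃ s < k, ∀ y ∈ S, |y - x| ≤ naturalScale k v x / (2 * k) →
      naturalScale k v x ^ (k - s) / 2 ≤ ‖v s y‖ := by
  obtain ⟨s, hs, hsR⟩ := exists_norm_eq_naturalScale_pow (v := v) (x := x) hk
  refine ⟨s, hs, fun y hy hxy ↦ ?_⟩
  linarith [norm_le_norm_sub_add (v s x) (v s y), norm_sub_rev (v s x) (v s y),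
    hv.norm_sub_le_naturalScale_pow_div_two hS hx hy hxy hs]

lemma naturalScale_le_two_mul (hv : HasLipDerivChain v k 1 S) (hS : Convex ℝ S)
    (hx : x ∈ S) (hy : y ∈ S) (hxy : |y - x| ≤ naturalScale k v x / (2 * k)) :
    naturalScale k v y ≤ 2 * naturalScale k v x := by
  have hR : 0 ≤ naturalScale k v x := naturalScale_nonneg
  refine naturalScale_le (by positivity) fun s hs ↦ ?_
  calc ‖v s y‖ ≤ 2 * naturalScale k v x ^ (k - s) :=
        hv.norm_le_two_mul_naturalScale_pow hS hx hy hxy hs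
    _ ≤ 2 ^ (k - s) * naturalScale k v x ^ (k - s) := by
        gcongr
        exact le_self_pow₀ one_le_two (Nat.sub_pos_of_lt hs).ne'
    _ = (2 * naturalScale k v x) ^ (k - s) := (mul_pow _ _ _).symm

lemma le_two_mul_naturalScale (hv : HasLipDerivChain v k 1 S) (hS : Convex ℝ S)
    (hx : x ∈ S) (hy : y ∈ S) (hxy : |y - x| ≤ naturalScale k v x / (2 * k)) (hk : k ≠ 0) :
    naturalScale k v x ≤ 2 * naturalScale k v y := by
  obtain ⟨s, hs, hsR⟩ := hv.exists_naturalScale_pow_div_two_le_norm hS hx hk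
  have hks : k - s ≠ 0 := (Nat.sub_pos_of_lt hs).ne'
  have hRy : 0 ≤ naturalScale k v y := naturalScale_nonneg
  refine (pow_le_pow_iff_left₀ naturalScale_nonneg (by positivity) hks).1 ?_
  calc naturalScale k v x ^ (k - s) ≤ 2 * ‖v s y‖ := by linarith [hsR y hy hxy]
    _ ≤ 2 ^ (k - s) * naturalScale k v y ^ (k - s) := by
        gcongr
        · exact le_self_pow₀ one_le_two hks
        · exact norm_le_naturalScale_pow hs
    _ = (2 * naturalScale k v y) ^ (k - s) := (mul_pow _ _ _).symm

end HasLipDerivChain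

end Scale

section Averaging

lemma ofReal_le_volume_Ioo_inter_ball {a b y r : ℝ} (hy : y ∈ Ioo a b) (hr₀ : 0 ≤ r)
    (hr : r ≤ (b - a) / 2) :
    ENNReal.ofReal r ≤ volume (Ioo a b ∩ Metric.ball y r) := by
  rw [Real.ball_eq_Ioo, Ioo_inter_Ioo, Real.volume_Ioo]
  refine ENNReal.ofReal_le_ofReal ?_
  obtain ⟨hay, hyb⟩ := hy
  rcases max_cases a (y - r) with h | h <;> rcases min_cases b (y + r) with h' | h' <;>
    linarith

variable {a b κ : ℝ} {ρ : ℝ → ℝ} {F : ℝ → ℝ≥0∞}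

lemma le_mul_setLIntegral_indicator_ball {y : ℝ} (hy : y ∈ Ioo a b) (hρy : 0 < ρ y)
    (hρle : ρ y ≤ b - a)
    (hcomp : ∀ x ∈ Ioo a b, |x - y| < ρ y → ρ x ≤ κ * ρ y ∧ ρ y ≤ κ * ρ x) :
    F y ≤ ENNReal.ofReal (2 * κ ^ 2) *
      ∫⁻ x in Ioo a b,
        (Metric.ball x (ρ x)).indicator (fun y ↦ (ENNReal.ofReal (ρ x))⁻¹ * F y) y := by
  have hκ : 1 ≤ κ := le_of_mul_le_mul_right (by simpa using (hcomp y hy (by simpa)).1) hρy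
  set r := ρ y / (2 * κ) with hr
  have hr0 : 0 < r := by positivity
  have hκr : κ * r = ρ y / 2 := by rw [hr]; field_simp
  have hr_le : r ≤ ρ y / 2 := hκr ▸ le_mul_of_one_le_left hr0.le hκ
  have hbelow : ∀ x ∈ Ioo a b ∩ Metric.ball y r, (ENNReal.ofReal (κ * ρ y))⁻¹ * F y ≤
      (Metric.ball x (ρ x)).indicator (fun y ↦ (ENNReal.ofReal (ρ x))⁻¹ * F y) y := by
    rintro x ⟨hx, hxy⟩
    rw [Metric.mem_ball, Real.dist_eq] at hxy
    obtain ⟨hxρ, hyρ⟩ := hcomp x hx (by linarith)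
    have hyx : y ∈ Metric.ball x (ρ x) := by
      rw [Metric.mem_ball, Real.dist_eq, abs_sub_comm]
      refine hxy.trans_le (le_of_mul_le_mul_left (a := κ) ?_ (by linarith))
      linarith
    rw [indicator_of_mem hyx]
    gcongr
  calc F y = ENNReal.ofReal (2 * κ ^ 2) *
        ((ENNReal.ofReal (κ * ρ y))⁻¹ * F y * ENNReal.ofReal r) := by
        have hcancel :
            ENNReal.ofReal (2 * κ ^ 2) * ENNReal.ofReal r = ENNReal.ofReal (κ * ρ y) := by
          rw [← ENNReal.ofReal_mul (by positivity)]
          congr 1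
          linear_combination 2 * κ * hκr
        rw [mul_comm _ (ENNReal.ofReal r), ← mul_assoc, hcancel, ← mul_assoc,
          ENNReal.mul_inv_cancel (ENNReal.ofReal_pos.2 (by positivity)).ne' ENNReal.ofReal_ne_top,
          one_mul]
    _ ≤ ENNReal.ofReal (2 * κ ^ 2) *
        ∫⁻ _ in Ioo a b ∩ Metric.ball y r, (ENNReal.ofReal (κ * ρ y))⁻¹ * F y := by
        rw [setLIntegral_const]
        gcongr
        exact ofReal_le_volume_Ioo_inter_ball hy hr0.le (by linarith)
    _ ≤ _ := mul_le_mul_right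
        ((setLIntegral_mono' (measurableSet_Ioo.inter measurableSet_ball) hbelow).trans
          (lintegral_mono_set inter_subset_left)) _

/- Average the local bounds over the centres `x` of the balls with weight `1 / ρ x`: by
comparability every `y` is covered with total weight `≳ 1`. -/
lemma setLIntegral_le_of_forall_ball {C : ℝ≥0∞}
    (hρm : AEMeasurable ρ (volume.restrict (Ioo a b)))
    (hF : AEMeasurable F (volume.restrict (Ioo a b)))
    (hρ : ∀ x ∈ Ioo a b, 0 ≤ ρ x) (hρle : ∀ x ∈ Ioo a b, ρ x ≤ b - a)
    (hcomp : ∀ x ∈ Ioo a b, ∀ y ∈ Ioo a b, |y - x| < ρ x → ρ y ≤ κ * ρ x ∧ ρ x ≤ κ * ρ y)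
    (hzero : ∀ x ∈ Ioo a b, ρ x = 0 → F x = 0)
    (hloc : ∀ x ∈ Ioo a b, 0 < ρ x →
      ∫⁻ y in Ioo a b ∩ Metric.ball x (ρ x), F y ≤ C * ENNReal.ofReal (ρ x)) :
    ∫⁻ y in Ioo a b, F y ≤ ENNReal.ofReal (2 * κ ^ 2) * (C * ENNReal.ofReal (b - a)) := by
  set μ := volume.restrict (Ioo a b)
  set G : ℝ → ℝ → ℝ≥0∞ := fun x ↦
    (Metric.ball x (ρ x)).indicator fun y ↦ (ENNReal.ofReal (ρ x))⁻¹ * F y with hG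
  have hGm : AEMeasurable (Function.uncurry G) (μ.prod μ) := by
    have hS : NullMeasurableSet {z : ℝ × ℝ | dist z.2 z.1 < ρ z.1} (μ.prod μ) :=
      nullMeasurableSet_lt (by fun_prop) hρm.comp_fst
    exact (AEMeasurable.indicator₀ (f := fun z : ℝ × ℝ ↦ (ENNReal.ofReal (ρ z.1))⁻¹ * F z.2)
      (hρm.comp_fst.ennreal_ofReal.inv.mul hF.comp_snd) hS)
  have hupper : ∀ x ∈ Ioo a b, ∫⁻ y in Ioo a b, G x y ≤ C := by
    intro x hx
    rw [hG, lintegral_indicator measurableSet_ball, Measure.restrict_restrict measurableSet_ball,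
      inter_comm, lintegral_const_mul'' _
        (hF.mono_measure (Measure.restrict_mono inter_subset_left le_rfl))]
    rcases (hρ x hx).eq_or_lt with h | h
    · simp [← h]
    · calc _ ≤ (ENNReal.ofReal (ρ x))⁻¹ * (C * ENNReal.ofReal (ρ x)) := by
            gcongr
            exact hloc x hx h
        _ = C := by
          rw [mul_comm C, ← mul_assoc, ENNReal.inv_mul_cancel (by simpa) ENNReal.ofReal_ne_top,
            one_mul]
  have hlower : ∀ y ∈ Ioo a b, F y ≤ ENNReal.ofReal (2 * κ ^ 2) * ∫⁻ x in Ioo a b, G x y := by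
    intro y hy
    rcases (hρ y hy).eq_or_lt with h | h
    · simp [hzero y hy h.symm]
    · exact le_mul_setLIntegral_indicator_ball hy h (hρle y hy) (hcomp y hy)
  calc ∫⁻ y in Ioo a b, F y
      ≤ ∫⁻ y in Ioo a b, ENNReal.ofReal (2 * κ ^ 2) * ∫⁻ x in Ioo a b, G x y :=
        setLIntegral_mono' measurableSet_Ioo hlower
    _ = ENNReal.ofReal (2 * κ ^ 2) * ∫⁻ x in Ioo a b, ∫⁻ y in Ioo a b, G x y := by
        rw [lintegral_const_mul' _ _ ENNReal.ofReal_ne_top, lintegral_lintegral_swap hGm]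
    _ ≤ ENNReal.ofReal (2 * κ ^ 2) * ∫⁻ _ in Ioo a b, C :=
        mul_le_mul_right (setLIntegral_mono' measurableSet_Ioo hupper) _
    _ = ENNReal.ofReal (2 * κ ^ 2) * (C * ENNReal.ofReal (b - a)) := by
        rw [setLIntegral_const, Real.volume_Ioo]

end Averaging

section LocalEstimate

variable {k : ℕ} {p q : ℝ}

lemma rpow_pow_pred_eq_rpow_pow (hk : 0 < k) (hq : k * q = (k - 1) * p) (r : ℝ≥0∞) :
    (r ^ (k - 1)) ^ p = (r ^ k) ^ q := by
  rw [← ENNReal.rpow_natCast, ← ENNReal.rpow_natCast, ← ENNReal.rpow_mul, ← ENNReal.rpow_mul,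
    Nat.cast_pred hk, hq]

lemma rpow_pow_pred_mul_rpow_pow (hk : 0 < k) (hp : 1 ≤ p) (hq1 : q ≤ 1)
    (hq : k * q = (k - 1) * p) (r : ℝ≥0∞) :
    (r ^ (k - 1)) ^ (p - 1) * (r ^ k) ^ (1 - q) = r := by
  have hk1 : (1 : ℝ) ≤ k := mod_cast hk
  have hexp : (k - 1) * (p - 1) + k * (1 - q) = 1 := by linear_combination -hq
  rw [← ENNReal.rpow_natCast, ← ENNReal.rpow_natCast, ← ENNReal.rpow_mul, ← ENNReal.rpow_mul,
    Nat.cast_pred hk, ← ENNReal.rpow_add_of_nonneg _ _ (mul_nonneg (by linarith) (by linarith))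
      (mul_nonneg (by linarith) (by linarith)), hexp, ENNReal.rpow_one]

lemma rpow_mul_rpow_neg_le (hk : 0 < k) (hp : 0 ≤ p) (hq : k * q = (k - 1) * p)
    {r y z : ℝ≥0∞} (hr₀ : r ≠ 0) (hr : r ≠ ⊤) (hy : y ≤ 2 * r ^ (k - 1)) (hz : r ^ k ≤ 2 * z) :
    y ^ p * z ^ (-q) ≤ 2 ^ p * 2 ^ q := by
  have hk1 : (1 : ℝ) ≤ k := mod_cast hk
  have hq0 : 0 ≤ q := nonneg_of_mul_nonneg_right
    (hq ▸ mul_nonneg (by linarith) hp) (by linarith : (0 : ℝ) < k)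
  have hzq : z ^ (-q) ≤ 2 ^ q * ((r ^ k) ^ q)⁻¹ := by
    have h2 : (2 : ℝ≥0∞) ^ q ≠ 0 := by simp
    have h2' : (2 : ℝ≥0∞) ^ q ≠ ⊤ := by simp
    calc z ^ (-q) = 2 ^ q * (2 ^ q * z ^ q)⁻¹ := by
          rw [ENNReal.rpow_neg, ENNReal.mul_inv (Or.inl h2) (Or.inl h2'), ← mul_assoc,
            ENNReal.mul_inv_cancel h2 h2', one_mul]
      _ ≤ 2 ^ q * ((r ^ k) ^ q)⁻¹ := by
          rw [← ENNReal.mul_rpow_of_nonneg _ _ hq0]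
          gcongr
  calc y ^ p * z ^ (-q) ≤ (2 * r ^ (k - 1)) ^ p * (2 ^ q * ((r ^ k) ^ q)⁻¹) := by gcongr
    _ = 2 ^ p * 2 ^ q * ((r ^ k) ^ q * ((r ^ k) ^ q)⁻¹) := by
        rw [ENNReal.mul_rpow_of_nonneg _ _ hp, rpow_pow_pred_eq_rpow_pow hk hq]
        ring
    _ = 2 ^ p * 2 ^ q := by
        rw [ENNReal.mul_inv_cancel _ _, mul_one]
        · simp [hr₀, hr]
        · exact ENNReal.rpow_ne_top_of_nonneg hq0 (ENNReal.pow_ne_top hr)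

lemma enorm_le_two_mul_ofReal_pow {E : Type*} [NormedAddCommGroup E] {y : E} {R : ℝ} {j : ℕ}
    (hR : 0 ≤ R) (h : ‖y‖ ≤ 2 * R ^ j) : ‖y‖ₑ ≤ 2 * ENNReal.ofReal R ^ j := by
  rw [← ofReal_norm, ← ENNReal.ofReal_pow hR, ← ENNReal.ofReal_ofNat 2,
    ← ENNReal.ofReal_mul zero_le_two]
  exact ENNReal.ofReal_le_ofReal h

lemma ofReal_pow_le_two_mul_enorm {E : Type*} [NormedAddCommGroup E] {y : E} {R : ℝ} {j : ℕ}
    (hR : 0 ≤ R) (h : R ^ j ≤ 2 * ‖y‖) : ENNReal.ofReal R ^ j ≤ 2 * ‖y‖ₑ := by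
  rw [← ofReal_norm, ← ENNReal.ofReal_pow hR, ← ENNReal.ofReal_ofNat 2,
    ← ENNReal.ofReal_mul zero_le_two]
  exact ENNReal.ofReal_le_ofReal h

lemma setLIntegral_enorm_rpow_mul_le_mul_volume (hk : 0 < k) (hp : 0 ≤ p)
    (hq : k * q = (k - 1) * p) {v : ℕ → ℝ → ℝ} {U : Set ℝ} (hU : MeasurableSet U) {R : ℝ}
    (hR : 0 < R) (hv₀ : ∀ y ∈ U, R ^ k ≤ 2 * ‖v 0 y‖) (hv₁ : ∀ y ∈ U, ‖v 1 y‖ ≤ 2 * R ^ (k - 1)) :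
    ∫⁻ y in U, ‖v 1 y‖ₑ ^ p * ‖v 0 y‖ₑ ^ (-q) ≤ 2 ^ p * 2 ^ q * volume U := by
  rw [← setLIntegral_const]
  exact setLIntegral_mono' hU fun y hy ↦ rpow_mul_rpow_neg_le hk hp hq (r := ENNReal.ofReal R)
    (by simpa) ENNReal.ofReal_ne_top (enorm_le_two_mul_ofReal_pow hR.le (hv₁ y hy))
    (ofReal_pow_le_two_mul_enorm hR.le (hv₀ y hy))

lemma DerivChain.setLIntegral_enorm_rpow_mul_le (hk : 0 < k) (hp : 1 ≤ p) (hq1 : q < 1)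
    (hq : k * q = (k - 1) * p) {v : ℕ → ℝ → ℝ} {t : ℕ} {U : Set ℝ} {R : ℝ}
    (hv : DerivChain v (t + 1) U) (hU : Convex ℝ U) (hne : ∀ y ∈ U, v (t + 1) y ≠ 0)
    (hR : 0 ≤ R) (hv₀ : ∀ y ∈ U, ‖v 0 y‖ ≤ 2 * R ^ k) (hv₁ : ∀ y ∈ U, ‖v 1 y‖ ≤ 2 * R ^ (k - 1)) :
    ∫⁻ y in U, ‖v 1 y‖ₑ ^ p * ‖v 0 y‖ₑ ^ (-q) ≤
      2 ^ (p - 1) * 2 ^ t * ENNReal.ofReal (2 / (1 - q)) * 2 ^ (1 - q) * ENNReal.ofReal R := by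
  have hp0 : 0 ≤ p - 1 := sub_nonneg.2 hp
  set r := ENNReal.ofReal R
  have hmaps : MapsTo (v 0) U (Metric.closedBall 0 (2 * R ^ k)) := fun y hy ↦
    mem_closedBall_zero_iff.2 (hv₀ y hy)
  calc ∫⁻ y in U, ‖v 1 y‖ₑ ^ p * ‖v 0 y‖ₑ ^ (-q)
      ≤ ∫⁻ y in U, (2 * r ^ (k - 1)) ^ (p - 1) * (‖v 1 y‖ₑ * ‖v 0 y‖ₑ ^ (-q)) := by
        refine setLIntegral_mono' hU.ordConnected.measurableSet fun y hy ↦ ?_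
        calc ‖v 1 y‖ₑ ^ p * ‖v 0 y‖ₑ ^ (-q)
            = ‖v 1 y‖ₑ ^ (p - 1) * (‖v 1 y‖ₑ * ‖v 0 y‖ₑ ^ (-q)) := by
              nth_rw 3 [← ENNReal.rpow_one ‖v 1 y‖ₑ]
              rw [← mul_assoc, ← ENNReal.rpow_add_of_nonneg _ _ hp0 zero_le_one, sub_add_cancel]
          _ ≤ (2 * r ^ (k - 1)) ^ (p - 1) * (‖v 1 y‖ₑ * ‖v 0 y‖ₑ ^ (-q)) := by
              gcongr
              exact enorm_le_two_mul_ofReal_pow hR (hv₁ y hy)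
    _ = (2 * r ^ (k - 1)) ^ (p - 1) * ∫⁻ y in U, ‖v 1 y‖ₑ * ‖v 0 y‖ₑ ^ (-q) := by
        rw [lintegral_const_mul' _ _ (ENNReal.rpow_ne_top_of_nonneg hp0
          (ENNReal.mul_ne_top ENNReal.ofNat_ne_top (ENNReal.pow_ne_top ENNReal.ofReal_ne_top)))]
    _ ≤ (2 * r ^ (k - 1)) ^ (p - 1) *
        (2 ^ t * (ENNReal.ofReal (2 / (1 - q)) * ENNReal.ofReal (2 * R ^ k) ^ (1 - q))) := by
        gcongr
        exact (hv.setLIntegral_enorm_mul_comp_le hU hne hmaps _).trans <| mul_le_mul_right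
          (setLIntegral_closedBall_zero_enorm_rpow_neg_le hq1 (by positivity)) _
    _ = 2 ^ (p - 1) * 2 ^ t * ENNReal.ofReal (2 / (1 - q)) * 2 ^ (1 - q) *
        ((r ^ (k - 1)) ^ (p - 1) * (r ^ k) ^ (1 - q)) := by
        rw [ENNReal.ofReal_mul zero_le_two, ENNReal.ofReal_pow hR, ENNReal.ofReal_ofNat,
          ENNReal.mul_rpow_of_nonneg _ _ hp0, ENNReal.mul_rpow_of_nonneg _ _ (by linarith)]
        ring
    _ = 2 ^ (p - 1) * 2 ^ t * ENNReal.ofReal (2 / (1 - q)) * 2 ^ (1 - q) * r := by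
        rw [rpow_pow_pred_mul_rpow_pow hk hp hq1.le hq]

/- Near `x` one of the derivatives `v s` keeps the size `R ^ (k - s)`. If `s = 0`, the integrand is
bounded; otherwise `v 0` is piecewise injective and the integral is estimated by substitution. -/
lemma exists_forall_setLIntegral_ball_naturalScale_le (hk : 2 ≤ k) (hp : 1 ≤ p) (hq1 : q < 1)
    (hq : k * q = (k - 1) * p) :
    ∃ C : ℝ≥0∞, C ≠ ⊤ ∧ ∀ (v : ℕ → ℝ → ℝ) (S : Set ℝ), Convex ℝ S → HasLipDerivChain v k 1 S →
      ∀ x ∈ S, 0 < naturalScale k v x →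
        ∫⁻ y in S ∩ Metric.ball x (naturalScale k v x / (2 * k)),
          ‖v 1 y‖ₑ ^ p * ‖v 0 y‖ₑ ^ (-q) ≤ C * ENNReal.ofReal (naturalScale k v x / (2 * k)) := by
  set C₀ : ℝ≥0∞ := 2 ^ p * 2 ^ q * 2
  set C₁ : ℝ≥0∞ :=
    2 ^ (p - 1) * 2 ^ k * ENNReal.ofReal (2 / (1 - q)) * 2 ^ (1 - q) * ENNReal.ofReal (2 * k)
  refine ⟨C₀ + C₁, by finiteness, fun v S hS hv x hx hR ↦ ?_⟩
  set R := naturalScale k v x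
  set ρ := R / (2 * k) with hρ
  have hU : Convex ℝ (S ∩ Metric.ball x ρ) := hS.inter (convex_ball x ρ)
  have hdist {y} (hy : y ∈ S ∩ Metric.ball x ρ) : |y - x| ≤ ρ := (Metric.mem_ball.1 hy.2).le
  have hle (s) (hs : s < k) (y) (hy : y ∈ S ∩ Metric.ball x ρ) : ‖v s y‖ ≤ 2 * R ^ (k - s) :=
    hv.norm_le_two_mul_naturalScale_pow hS hx hy.1 (hdist hy) hs
  obtain ⟨s, hsk, hs⟩ := hv.exists_naturalScale_pow_div_two_le_norm hS hx (by omega)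
  rcases s with _ | t
  · calc _ ≤ 2 ^ p * 2 ^ q * volume (S ∩ Metric.ball x ρ) :=
          setLIntegral_enorm_rpow_mul_le_mul_volume (by omega) (by linarith) hq
            hU.ordConnected.measurableSet hR
            (fun y hy ↦ (div_le_iff₀' zero_lt_two).1 (hs y hy.1 (hdist hy))) (hle 1 hk)
      _ ≤ 2 ^ p * 2 ^ q * volume (Metric.ball x ρ) := by
          gcongr
          exact inter_subset_right
      _ = C₀ * ENNReal.ofReal ρ := by
          rw [Real.volume_ball, ENNReal.ofReal_mul zero_le_two, ENNReal.ofReal_ofNat, ← mul_assoc]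
      _ ≤ (C₀ + C₁) * ENNReal.ofReal ρ := by gcongr; exact le_self_add
  · have hne : ∀ y ∈ S ∩ Metric.ball x ρ, v (t + 1) y ≠ 0 := fun y hy ↦
      norm_pos_iff.1 ((by positivity : 0 < R ^ (k - (t + 1)) / 2).trans_le (hs y hy.1 (hdist hy)))
    calc _ ≤ 2 ^ (p - 1) * 2 ^ t * ENNReal.ofReal (2 / (1 - q)) * 2 ^ (1 - q) * ENNReal.ofReal R :=
          (hv.derivChain.mono (by omega) inter_subset_left).setLIntegral_enorm_rpow_mul_le
            (by omega) hp hq1 hq hU hne hR.le (hle 0 (by omega)) (hle 1 hk)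
      _ ≤ 2 ^ (p - 1) * 2 ^ k * ENNReal.ofReal (2 / (1 - q)) * 2 ^ (1 - q) * ENNReal.ofReal R := by
          gcongr
          · exact one_le_two
          · omega
      _ = C₁ * ENNReal.ofReal ρ := by
          rw [mul_assoc _ (ENNReal.ofReal (2 * k)), ← ENNReal.ofReal_mul (by positivity), hρ,
            mul_div_cancel₀ _ (by positivity)]
      _ ≤ (C₀ + C₁) * ENNReal.ofReal ρ := by gcongr; exact le_add_self

end LocalEstimate

section ScaledDerivBound

variable {E F : Type*} [NormedAddCommGroup E] [NormedSpace ℝ E] [NormedAddCommGroup F]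
  [NormedSpace ℝ F] {d : ℕ → ℝ → E} {k : ℕ} {K a b : ℝ}

/-- `d 0` is of class `C^{k-1,1}` on `(a, b)` with derivatives `d s`, where `d 1, …, d (k - 1)` and
the Lipschitz constant of `d (k - 1)` are bounded by `K (b - a)^{-s}` for `s = 1, …, k`. There is no
bound on `d 0` itself. -/
structure ScaledDerivBound (d : ℕ → ℝ → E) (k : ℕ) (K a b : ℝ) : Prop where
  derivChain : DerivChain d (k - 1) (Ioo a b)
  norm_le : ∀ s, 1 ≤ s → s ≤ k - 1 → ∀ t ∈ Ioo a b, ‖d s t‖ ≤ K * ((b - a) ^ s)⁻¹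
  norm_sub_le : ∀ x ∈ Ioo a b, ∀ y ∈ Ioo a b,
    ‖d (k - 1) x - d (k - 1) y‖ ≤ K * ((b - a) ^ k)⁻¹ * |x - y|

lemma HasLipDerivChain.continuousOn {L : ℝ} {S : Set ℝ} (hd : HasLipDerivChain d k L S) {s : ℕ}
    (hs : s < k) : ContinuousOn (d s) S := by
  rcases (Nat.le_pred_of_lt hs).lt_or_eq with h | rfl
  · exact fun x hx ↦ (hd.derivChain s h x hx).continuousWithinAt
  · refine (LipschitzOnWith.of_dist_le_mul (K := L.toNNReal) fun x hx y hy ↦ ?_).continuousOn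
    rw [dist_eq_norm, Real.dist_eq, Real.coe_toNNReal']
    exact (hd.norm_sub_le x hx y hy).trans (by gcongr; exact le_max_left _ _)

namespace ScaledDerivBound

lemma mono (hd : ScaledDerivBound d k K a b) (hab : a < b) {K' : ℝ} (hK : K ≤ K') :
    ScaledDerivBound d k K' a b where
  derivChain := hd.derivChain
  norm_le s hs hsk t ht := (hd.norm_le s hs hsk t ht).trans (by gcongr)
  norm_sub_le x hx y hy := (hd.norm_sub_le x hx y hy).trans (by gcongr)

lemma hasDerivAt (hd : ScaledDerivBound d k K a b) {s : ℕ} (hs : s < k - 1) {t : ℝ}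
    (ht : t ∈ Ioo a b) : HasDerivAt (d s) (d (s + 1) t) t :=
  (hd.derivChain s hs t ht).hasDerivAt (isOpen_Ioo.mem_nhds ht)

lemma hasLipDerivChain (hd : ScaledDerivBound d k K a b) :
    HasLipDerivChain d k (K * ((b - a) ^ k)⁻¹) (Ioo a b) where
  derivChain := hd.derivChain
  norm_sub_le := hd.norm_sub_le

lemma norm_sub_le_of_lt (hd : ScaledDerivBound d k K a b) {s : ℕ} (hs : s < k - 1) {x y : ℝ}
    (hx : x ∈ Ioo a b) (hy : y ∈ Ioo a b) :
    ‖d s x - d s y‖ ≤ K * ((b - a) ^ (s + 1))⁻¹ * |x - y| :=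
  (convex_Ioo a b).norm_image_sub_le_of_norm_hasDerivWithin_le (fun z hz ↦ hd.derivChain s hs z hz)
    (fun z hz ↦ hd.norm_le (s + 1) (by omega) hs z hz) hy hx

lemma norm_zero_sub_le (hd : ScaledDerivBound d k K a b) (hk : 2 ≤ k) {x y : ℝ}
    (hx : x ∈ Ioo a b) (hy : y ∈ Ioo a b) : ‖d 0 x - d 0 y‖ ≤ K := by
  have hab : 0 < b - a := sub_pos.2 (hx.1.trans hx.2)
  have hxy : |x - y| ≤ b - a := abs_sub_le_of_le_of_le hx.1.le hx.2.le hy.1.le hy.2.le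
  have hK : 0 ≤ K := nonneg_of_mul_nonneg_left
    ((norm_nonneg _).trans (hd.norm_le 1 le_rfl (by omega) x hx)) (by positivity)
  calc ‖d 0 x - d 0 y‖ ≤ K * ((b - a) ^ 1)⁻¹ * |x - y| := hd.norm_sub_le_of_lt (by omega) hx hy
    _ ≤ K * ((b - a) ^ 1)⁻¹ * (b - a) := by gcongr
    _ = K := by field_simp

lemma of_le (hd : ScaledDerivBound d k K a b) {j : ℕ} (hj : j ≠ 0) (hjk : j ≤ k) :
    ScaledDerivBound d j K a b where
  derivChain := hd.derivChain.mono (Nat.sub_le_sub_right hjk 1) subset_rfl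
  norm_le s hs hsj := hd.norm_le s hs (by omega)
  norm_sub_le x hx y hy := by
    rcases hjk.lt_or_eq with h | rfl
    · simpa [Nat.sub_add_cancel (Nat.one_le_iff_ne_zero.2 hj)] using
        hd.norm_sub_le_of_lt (s := j - 1) (by omega) hx hy
    · exact hd.norm_sub_le x hx y hy

lemma clm_comp (hd : ScaledDerivBound d k K a b) (φ : E →L[ℝ] F) :
    ScaledDerivBound (fun s t ↦ φ (d s t)) k (‖φ‖ * K) a b where
  derivChain s hs x hx := φ.hasFDerivAt.comp_hasDerivWithinAt x (hd.derivChain s hs x hx)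
  norm_le s hs hsk t ht := by
    rw [mul_assoc]
    exact φ.le_opNorm_of_le (hd.norm_le s hs hsk t ht)
  norm_sub_le x hx y hy := by
    rw [← map_sub, mul_assoc ‖φ‖, mul_assoc ‖φ‖]
    exact φ.le_opNorm_of_le (hd.norm_sub_le x hx y hy)

end ScaledDerivBound

end ScaledDerivBound

section GlobalEstimate

variable {k : ℕ} {p q : ℝ} {a b : ℝ}

lemma ScaledDerivBound.naturalScale_le_two_mul_length {v : ℕ → ℝ → ℝ}
    (hv : ScaledDerivBound v k ((b - a) ^ k) a b) (hab : a < b) {x : ℝ} (hx : x ∈ Ioo a b)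
    (hv₀ : ‖v 0 x‖ ≤ 2 * (b - a) ^ k) : naturalScale k v x ≤ 2 * (b - a) := by
  have hL : 0 < b - a := sub_pos.2 hab
  refine naturalScale_le (by positivity) fun s hs ↦ ?_
  have hks : k - s ≠ 0 := (Nat.sub_pos_of_lt hs).ne'
  calc ‖v s x‖ ≤ 2 * (b - a) ^ (k - s) := by
        rcases s.eq_zero_or_pos with rfl | h
        · simpa using hv₀
        · have := hv.norm_le s h (by omega) x hx
          rw [← pow_sub₀ _ hL.ne' hs.le] at this
          exact this.trans (le_mul_of_one_le_left (by positivity) one_le_two)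
    _ ≤ 2 ^ (k - s) * (b - a) ^ (k - s) := by
        gcongr
        exact le_self_pow₀ one_le_two hks
    _ = (2 * (b - a)) ^ (k - s) := (mul_pow _ _ _).symm

lemma pow_mul_rpow_mul_pow_mul_rpow_neg (hq : k * q = (k - 1) * p) {r x y : ℝ≥0∞} (hr₀ : r ≠ 0)
    (hr : r ≠ ⊤) (hx : x ≠ ⊤) (hy : y ≠ ⊤) :
    (r ^ k * x) ^ p * (r ^ k * y) ^ (-q) = r ^ p * (x ^ p * y ^ (-q)) := by
  have hr_rpow : (r ^ k) ^ p * (r ^ k) ^ (-q) = r ^ p := by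
    rw [← ENNReal.rpow_add _ _ (by positivity) (by finiteness), ← ENNReal.rpow_natCast,
      ← ENNReal.rpow_mul]
    congr 1
    linear_combination -hq
  rw [ENNReal.mul_rpow_of_ne_top (by finiteness) hx, ENNReal.mul_rpow_of_ne_top (by finiteness) hy,
    mul_mul_mul_comm, hr_rpow]

lemma exists_forall_setLIntegral_le_of_naturalScale_le (hk : 2 ≤ k) (hp : 1 ≤ p) (hq1 : q < 1)
    (hq : k * q = (k - 1) * p) :
    ∃ C : ℝ≥0∞, C ≠ ⊤ ∧ ∀ (v : ℕ → ℝ → ℝ) (a b : ℝ), HasLipDerivChain v k 1 (Ioo a b) →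
      (∀ x ∈ Ioo a b, naturalScale k v x ≤ (b - a) * (2 * k)) →
        ∫⁻ y in Ioo a b, ‖v 1 y‖ₑ ^ p * ‖v 0 y‖ₑ ^ (-q) ≤ C * ENNReal.ofReal (b - a) := by
  obtain ⟨C, hC, hloc⟩ := exists_forall_setLIntegral_ball_naturalScale_le hk hp hq1 hq
  refine ⟨ENNReal.ofReal (2 * 2 ^ 2) * C, by finiteness, fun v a b hv hscale ↦ ?_⟩
  have hmeas : ∀ s < k, AEStronglyMeasurable (v s) (volume.restrict (Ioo a b)) :=
    fun s hs ↦ (hv.continuousOn hs).aestronglyMeasurable measurableSet_Ioo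
  have hI : Convex ℝ (Ioo a b) := convex_Ioo a b
  have hk2 : (0 : ℝ) < 2 * k := by positivity
  rw [mul_assoc]
  refine setLIntegral_le_of_forall_ball (ρ := fun x ↦ naturalScale k v x / (2 * k))
    ((aemeasurable_naturalScale hmeas).div_const _)
    (((hmeas 1 hk).enorm.pow_const p).mul ((hmeas 0 (by omega)).enorm.pow_const (-q)))
    (fun x _ ↦ div_nonneg naturalScale_nonneg hk2.le)
    (fun x hx ↦ (div_le_iff₀ hk2).2 (hscale x hx))
    (fun x hx y hy hxy ↦ ⟨?_, ?_⟩) (fun x _ hx0 ↦ ?_)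
    fun x hx hρ ↦ hloc v (Ioo a b) hI hv x hx ((div_pos_iff_of_pos_right hk2).1 hρ)
  · rw [← mul_div_assoc]
    gcongr
    exact hv.naturalScale_le_two_mul hI hx hy hxy.le
  · rw [← mul_div_assoc]
    gcongr
    exact hv.le_two_mul_naturalScale hI hx hy hxy.le (by omega)
  · have hv₁ : ‖v 1 x‖ ≤ 0 ^ (k - 1) :=
      (div_eq_zero_iff.1 hx0).resolve_right hk2.ne' ▸ norm_le_naturalScale_pow (v := v) hk
    rw [zero_pow (by omega), norm_le_zero_iff] at hv₁
    simp [hv₁, (by linarith : 0 < p)]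

/- If `‖v 0‖` exceeds `2 (b - a) ^ k` somewhere, it exceeds `(b - a) ^ k` everywhere and the
integrand is bounded. Otherwise the natural scale is at most `2 (b - a)` throughout. -/
lemma exists_forall_setLIntegral_le_of_length_pow (hk : 2 ≤ k) (hp : 1 ≤ p) (hq1 : q < 1)
    (hq : k * q = (k - 1) * p) :
    ∃ C : ℝ≥0∞, C ≠ ⊤ ∧ ∀ (v : ℕ → ℝ → ℝ) (a b : ℝ), a < b →
      ScaledDerivBound v k ((b - a) ^ k) a b →
        ∫⁻ y in Ioo a b, ‖v 1 y‖ₑ ^ p * ‖v 0 y‖ₑ ^ (-q) ≤ C * ENNReal.ofReal (b - a) := by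
  obtain ⟨C, hC, hsmall⟩ := exists_forall_setLIntegral_le_of_naturalScale_le hk hp hq1 hq
  refine ⟨2 ^ p * 2 ^ q + C, by finiteness, fun v a b hab hv ↦ ?_⟩
  have hL : 0 < b - a := sub_pos.2 hab
  have hk1 : (1 : ℝ) ≤ k := mod_cast (by omega : 1 ≤ k)
  rw [add_mul]
  by_cases hbig : ∃ x ∈ Ioo a b, 2 * (b - a) ^ k < ‖v 0 x‖
  · obtain ⟨x, hx, hvx⟩ := hbig
    rw [← Real.volume_Ioo]
    refine le_add_right (setLIntegral_enorm_rpow_mul_le_mul_volume (by omega) (by linarith) hq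
      measurableSet_Ioo hL (fun y hy ↦ ?_) fun y hy ↦ ?_)
    · linarith [norm_le_norm_sub_add (v 0 x) (v 0 y), hv.norm_zero_sub_le hk hx hy,
        norm_nonneg (v 0 y)]
    · have hv₁ := hv.norm_le 1 le_rfl (by omega) y hy
      rw [← pow_sub₀ _ hL.ne' (by omega)] at hv₁
      exact hv₁.trans (le_mul_of_one_le_left (by positivity) one_le_two)
  · push Not at hbig
    have hlip : HasLipDerivChain v k 1 (Ioo a b) := by simpa [hL.ne'] using hv.hasLipDerivChain
    refine le_add_left (hsmall v a b hlip fun x hx ↦ ?_)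
    calc naturalScale k v x ≤ 2 * (b - a) := hv.naturalScale_le_two_mul_length hab hx (hbig x hx)
      _ ≤ (b - a) * (2 * k) := by nlinarith

/- Multiplication by `((b - a) / D) ^ k` reduces to `D = b - a`. -/
lemma exists_forall_setLIntegral_le_of_scaledDerivBound_real (hk : 2 ≤ k) (hp : 1 ≤ p)
    (hq1 : q < 1) (hq : k * q = (k - 1) * p) :
    ∃ C : ℝ≥0∞, C ≠ ⊤ ∧ ∀ (v : ℕ → ℝ → ℝ) (a b D : ℝ), a < b → 0 < D →
      ScaledDerivBound v k (D ^ k) a b →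
        ∫⁻ y in Ioo a b, ‖v 1 y‖ₑ ^ p * ‖v 0 y‖ₑ ^ (-q) ≤
          C * (ENNReal.ofReal (D / (b - a)) ^ p * ENNReal.ofReal (b - a)) := by
  obtain ⟨C, hC, hlength⟩ := exists_forall_setLIntegral_le_of_length_pow hk hp hq1 hq
  refine ⟨C, hC, fun v a b D hab hD hv ↦ ?_⟩
  have hL : 0 < b - a := sub_pos.2 hab
  set c : ℝ := ((b - a) / D) ^ k
  have hc : 0 < c := by positivity
  have hcv := hv.clm_comp (c • ContinuousLinearMap.id ℝ ℝ)
  rw [norm_smul, ContinuousLinearMap.norm_id, mul_one, Real.norm_of_nonneg hc.le, ← mul_pow,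
    div_mul_cancel₀ _ hD.ne'] at hcv
  have hscale (y : ℝ) : ‖v 1 y‖ₑ ^ p * ‖v 0 y‖ₑ ^ (-q) = ENNReal.ofReal (D / (b - a)) ^ p *
      (‖c * v 1 y‖ₑ ^ p * ‖c * v 0 y‖ₑ ^ (-q)) := by
    have hr : ENNReal.ofReal (D / (b - a)) ^ p * ENNReal.ofReal ((b - a) / D) ^ p = 1 := by
      rw [← ENNReal.mul_rpow_of_nonneg _ _ (by linarith), ← ENNReal.ofReal_mul (by positivity),
        div_mul_div_cancel₀ hL.ne', div_self hD.ne', ENNReal.ofReal_one, ENNReal.one_rpow]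
    have hr₀ : ENNReal.ofReal ((b - a) / D) ≠ 0 := (ENNReal.ofReal_pos.2 (by positivity)).ne'
    rw [enorm_mul, enorm_mul, Real.enorm_of_nonneg hc.le, ENNReal.ofReal_pow (by positivity),
      pow_mul_rpow_mul_pow_mul_rpow_neg hq hr₀ (by finiteness) (by finiteness) (by finiteness),
      ← mul_assoc, hr, one_mul]
  simp_rw [hscale]
  rw [lintegral_const_mul' _ _ (by finiteness), mul_left_comm]
  exact mul_le_mul_right (hlength _ a b hab hcv) _

lemma enorm_rpow_mul_enorm_rpow_neg_le_re_add_im (hp : 1 ≤ p) (hq : 0 ≤ q) (z w : ℂ) :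
    ‖z‖ₑ ^ p * ‖w‖ₑ ^ (-q) ≤
      2 ^ (p - 1) * (‖z.re‖ₑ ^ p * ‖w.re‖ₑ ^ (-q) + ‖z.im‖ₑ ^ p * ‖w.im‖ₑ ^ (-q)) := by
  have hz : ‖z‖ₑ ≤ ‖z.re‖ₑ + ‖z.im‖ₑ := by
    simpa [← ofReal_norm, ← ENNReal.ofReal_add] using
      ENNReal.ofReal_le_ofReal (Complex.norm_le_abs_re_add_abs_im z)
  have hw_re : ‖w.re‖ₑ ≤ ‖w‖ₑ := enorm_le_iff_norm_le.2 (Complex.abs_re_le_norm w)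
  have hw_im : ‖w.im‖ₑ ≤ ‖w‖ₑ := enorm_le_iff_norm_le.2 (Complex.abs_im_le_norm w)
  calc ‖z‖ₑ ^ p * ‖w‖ₑ ^ (-q)
      ≤ 2 ^ (p - 1) * (‖z.re‖ₑ ^ p + ‖z.im‖ₑ ^ p) * ‖w‖ₑ ^ (-q) := by
        gcongr
        exact (ENNReal.rpow_le_rpow hz (by linarith)).trans
          (ENNReal.rpow_add_le_mul_rpow_add_rpow _ _ hp)
    _ = 2 ^ (p - 1) * (‖z.re‖ₑ ^ p * ‖w‖ₑ ^ (-q) + ‖z.im‖ₑ ^ p * ‖w‖ₑ ^ (-q)) := by ring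
    _ ≤ _ := by
        simp only [ENNReal.rpow_neg]
        gcongr

lemma exists_forall_setLIntegral_le_of_scaledDerivBound (hk : 2 ≤ k) (hp : 1 ≤ p) (hq1 : q < 1)
    (hq : k * q = (k - 1) * p) :
    ∃ C : ℝ≥0∞, C ≠ ⊤ ∧ ∀ (β : ℕ → ℝ → ℂ) (a b D : ℝ), a < b → 0 < D →
      ScaledDerivBound β k (D ^ k) a b →
        ∫⁻ y in Ioo a b, ‖β 1 y‖ₑ ^ p * ‖β 0 y‖ₑ ^ (-q) ≤
          C * (ENNReal.ofReal (D / (b - a)) ^ p * ENNReal.ofReal (b - a)) := by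
  obtain ⟨C, hC, hreal⟩ := exists_forall_setLIntegral_le_of_scaledDerivBound_real hk hp hq1 hq
  refine ⟨2 ^ (p - 1) * (C + C), by finiteness, fun β a b D hab hD hβ ↦ ?_⟩
  have hre := hβ.clm_comp Complex.reCLM
  have him := hβ.clm_comp Complex.imCLM
  rw [Complex.reCLM_norm, one_mul] at hre
  rw [Complex.imCLM_norm, one_mul] at him
  have hq0 : 0 ≤ q := by
    have hk1 : (1 : ℝ) ≤ k := mod_cast (by omega : 1 ≤ k)
    nlinarith
  have hmeas : AEMeasurable (fun y ↦ ‖(β 1 y).re‖ₑ ^ p * ‖(β 0 y).re‖ₑ ^ (-q))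
      (volume.restrict (Ioo a b)) :=
    have hcont {s : ℕ} (hs : s < k) :
        AEStronglyMeasurable (fun y ↦ (β s y).re) (volume.restrict (Ioo a b)) :=
      (hre.hasLipDerivChain.continuousOn hs).aestronglyMeasurable measurableSet_Ioo
    ((hcont hk).enorm.pow_const p).mul ((hcont (by omega)).enorm.pow_const (-q))
  calc _ ≤ ∫⁻ y in Ioo a b, 2 ^ (p - 1) * (‖(β 1 y).re‖ₑ ^ p * ‖(β 0 y).re‖ₑ ^ (-q) +
        ‖(β 1 y).im‖ₑ ^ p * ‖(β 0 y).im‖ₑ ^ (-q)) :=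
        lintegral_mono fun y ↦ enorm_rpow_mul_enorm_rpow_neg_le_re_add_im hp hq0 (β 1 y) (β 0 y)
    _ = 2 ^ (p - 1) * ((∫⁻ y in Ioo a b, ‖(β 1 y).re‖ₑ ^ p * ‖(β 0 y).re‖ₑ ^ (-q)) +
        ∫⁻ y in Ioo a b, ‖(β 1 y).im‖ₑ ^ p * ‖(β 0 y).im‖ₑ ^ (-q)) := by
        rw [lintegral_const_mul' _ _ (by finiteness), lintegral_add_left' hmeas]
    _ ≤ _ := by
        rw [mul_assoc, add_mul]
        exact mul_le_mul_right
          (add_le_add (hreal _ a b D hab hD hre) (hreal _ a b D hab hD him)) _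

end GlobalEstimate

section RootDerivative

lemma hasDerivAt_of_hasDerivAt_comp {𝕜 𝕜' : Type*} [NontriviallyNormedField 𝕜]
    [NontriviallyNormedField 𝕜'] [NormedAlgebra 𝕜 𝕜'] {f : 𝕜 → 𝕜'} {g : 𝕜' → 𝕜'} {g' c : 𝕜'}
    {t : 𝕜}
    (hf : ContinuousAt f t) (hg : HasDerivAt g g' (f t)) (hg' : g' ≠ 0)
    (hgf : HasDerivAt (g ∘ f) c t) : HasDerivAt f (c / g') t := by
  have hdslope : ContinuousAt (fun y ↦ dslope g (f t) (f y)) t :=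
    (continuousAt_dslope_same.2 hg.differentiableAt).comp hf
  have hdslope_t : dslope g (f t) (f t) = g' := by rw [dslope_same, hg.deriv]
  have hne : ∀ᶠ y in 𝓝 t, dslope g (f t) (f y) ≠ 0 := hdslope.eventually_ne (hdslope_t ▸ hg')
  rw [hasDerivAt_iff_tendsto_slope] at hgf ⊢
  rw [← hdslope_t]
  refine (hgf.div (hdslope.tendsto.mono_left nhdsWithin_le_nhds) (hdslope_t ▸ hg')).congr' ?_
  filter_upwards [nhdsWithin_le_nhds hne] with y hy
  have hfactor : dslope g (f t) (f y) * (f y - f t) = g (f y) - g (f t) := by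
    simpa [mul_comm] using sub_smul_dslope g (f t) (f y)
  simp only [Pi.div_apply, slope, vsub_eq_sub, Function.comp_apply]
  rw [div_eq_iff hy, ← hfactor, smul_mul_assoc, mul_comm (f y - f t)]

lemma ae_deriv_eq_zero_of_eq_zero {F : Type*} [NormedAddCommGroup F] [NormedSpace ℝ F]
    (f : ℝ → F) : ∀ᵐ x, f x = 0 → deriv f x = 0 := by
  have hcountable : {x | f x = 0 ∧ deriv f x ≠ 0}.Countable := by
    refine (HereditarilyLindelofSpace.isLindelof _).countable_of_isDiscrete ?_
    rw [isDiscrete_iff_nhdsNE]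
    rintro x ⟨-, hx⟩
    rw [← disjoint_iff, disjoint_principal_right]
    filter_upwards [(differentiableAt_of_deriv_ne_zero hx).hasDerivAt.eventually_ne hx (c := 0)]
      with z hz hz' using hz hz'.1
  filter_upwards [hcountable.ae_notMem volume] with x hx hfx
  by_contra hne
  exact hx ⟨hfx, hne⟩

variable {𝕜 : Type*} [RCLike 𝕜] {k : ℕ} {f β : ℝ → 𝕜} {β' : 𝕜} {a b t : ℝ}

lemma hasDerivAt_root (hk : k ≠ 0) (hf : ContinuousAt f t) (hroot : ∀ᶠ y in 𝓝 t, f y ^ k = β y)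
    (hβ : HasDerivAt β β' t) (hft : f t ≠ 0) : HasDerivAt f (β' / (k * f t ^ (k - 1))) t :=
  hasDerivAt_of_hasDerivAt_comp hf (hasDerivAt_pow k (f t)) (by simp [hk, hft])
    (hβ.congr_of_eventuallyEq hroot)

lemma ae_enorm_deriv_root_rpow_le (hk : 0 < k) {p q : ℝ} (hp : 0 < p) (hq : k * q = (k - 1) * p)
    {β' : ℝ → 𝕜} (hβ : ∀ t ∈ Ioo a b, HasDerivAt β (β' t) t) (hf : ContinuousOn f (Ioo a b))
    (hroot : ∀ t ∈ Ioo a b, f t ^ k = β t) :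
    ∀ᵐ t ∂volume.restrict (Ioo a b), ‖deriv f t‖ₑ ^ p ≤ ‖β' t‖ₑ ^ p * ‖β t‖ₑ ^ (-q) := by
  rw [ae_restrict_iff' measurableSet_Ioo]
  filter_upwards [ae_deriv_eq_zero_of_eq_zero f] with t hzero ht
  by_cases hft : f t = 0
  · simp [hzero hft, hp]
  have hnhds : Ioo a b ∈ 𝓝 t := isOpen_Ioo.mem_nhds ht
  have hderiv := (hasDerivAt_root hk.ne' (hf.continuousAt hnhds)
    (by filter_upwards [hnhds] using hroot) (hβ t ht) hft).deriv
  have hk_enorm : 1 ≤ ‖(k : 𝕜)‖ₑ := by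
    rw [← ofReal_norm, RCLike.norm_natCast, ENNReal.one_le_ofReal]
    exact mod_cast hk
  calc ‖deriv f t‖ₑ ^ p = (‖β' t‖ₑ / (‖(k : 𝕜)‖ₑ * ‖f t‖ₑ ^ (k - 1))) ^ p := by
        rw [hderiv, div_eq_mul_inv, enorm_mul, enorm_inv (by simp [hk.ne', hft]), enorm_mul,
          enorm_pow, ← div_eq_mul_inv]
    _ ≤ (‖β' t‖ₑ / ‖f t‖ₑ ^ (k - 1)) ^ p := by
        gcongr
        exact le_mul_of_one_le_left' hk_enorm
    _ = ‖β' t‖ₑ ^ p * ‖β t‖ₑ ^ (-q) := by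
        rw [ENNReal.div_rpow_of_nonneg _ _ hp.le, rpow_pow_pred_eq_rpow_pow hk hq, ← enorm_pow,
          hroot t ht, ENNReal.rpow_neg, div_eq_mul_inv]

end RootDerivative

section AbsoluteContinuity

variable {E : Type*} [NormedAddCommGroup E] {f : ℝ → E} {S : Set ℝ}

lemma absContOn_of_enorm_sub_le {g : ℝ → ℝ≥0∞} (hg : ∫⁻ y in S, g y ≠ ⊤)
    (h : ∀ u v, u ≤ v → Icc u v ⊆ S → ‖f v - f u‖ₑ ≤ ∫⁻ y in Ioo u v, g y) : AbsContOn f S := by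
  intro ε hε
  obtain ⟨δ, hδ, hsmall⟩ :=
    exists_pos_setLIntegral_lt_of_measure_lt hg (ENNReal.ofReal_pos.2 hε).ne'
  obtain ⟨η, hη, hηδ⟩ := ENNReal.lt_iff_exists_nnreal_btwn.1 hδ
  refine ⟨η, mod_cast hη, fun N u v huv hdisj hsum ↦ ?_⟩
  set U : Set ℝ := ⋃ i, Ioo (u i) (v i)
  have hUS : U ⊆ S := iUnion_subset fun i ↦ Ioo_subset_Icc_self.trans (huv i).2
  have hU : MeasurableSet U := MeasurableSet.iUnion fun i ↦ measurableSet_Ioo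
  have hvol : volume.restrict S U < δ := by
    rw [Measure.restrict_apply hU, inter_eq_left.2 hUS]
    calc volume U ≤ ∑ i, volume (Ioo (u i) (v i)) := measure_iUnion_fintype_le _ _
      _ = ENNReal.ofReal (∑ i, (v i - u i)) := by
        simp_rw [Real.volume_Ioo]
        exact (ENNReal.ofReal_sum_of_nonneg fun i _ ↦ sub_nonneg.2 (huv i).1).symm
      _ ≤ η := ENNReal.ofReal_le_coe.2 hsum.le
      _ < δ := hηδ
  rw [← ENNReal.ofReal_lt_ofReal_iff hε, ENNReal.ofReal_sum_of_nonneg fun i _ ↦ norm_nonneg _]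
  calc ∑ i, ENNReal.ofReal ‖f (v i) - f (u i)‖ ≤ ∑ i, ∫⁻ y in Ioo (u i) (v i), g y :=
        Finset.sum_le_sum fun i _ ↦ (ofReal_norm _).trans_le (h _ _ (huv i).1 (huv i).2)
    _ = ∫⁻ y in U, g y ∂volume.restrict S := by
        rw [Measure.restrict_restrict hU, inter_eq_left.2 hUS,
          lintegral_iUnion (fun i ↦ measurableSet_Ioo) fun i j hij ↦ hdisj i j hij, tsum_fintype]
    _ < ENNReal.ofReal ε := hsmall U hvol

variable [NormedSpace ℝ E] {u v : ℝ}

lemma enorm_sub_le_setLIntegral_enorm_deriv (huv : u ≤ v) (hf : ContinuousOn f (Icc u v))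
    (hd : DifferentiableOn ℝ f (Ioo u v)) (hi : IntegrableOn (deriv f) (Ioo u v)) :
    ‖f v - f u‖ₑ ≤ ∫⁻ y in Ioo u v, ‖deriv f y‖ₑ := by
  have hbound : ‖f v - f u‖ ≤ ∫ y in Ioo u v, ‖deriv f y‖ := by
    rw [← integral_Ioc_eq_integral_Ioo, ← intervalIntegral.integral_of_le huv]
    exact norm_sub_le_integral_of_norm_deriv_le_of_le huv hf hd (ae_of_all _ fun _ _ ↦ le_rfl)
      ((intervalIntegrable_iff_integrableOn_Ioo_of_le huv).2 hi.norm)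
  rw [← ofReal_integral_norm_eq_lintegral_enorm hi, ← ofReal_norm]
  exact ENNReal.ofReal_le_ofReal hbound

/- Between its first and last zero `f` has no increment, so only the two outer intervals, where `f`
is differentiable, contribute. -/
lemma enorm_sub_le_setLIntegral_enorm_deriv_of_ne_zero (huv : u ≤ v)
    (hf : ContinuousOn f (Icc u v)) (hd : ∀ x ∈ Ioo u v, f x ≠ 0 → DifferentiableAt ℝ f x)
    (hi : IntegrableOn (deriv f) (Ioo u v)) :
    ‖f v - f u‖ₑ ≤ ∫⁻ y in Ioo u v, ‖deriv f y‖ₑ := by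
  set Z : Set ℝ := Icc u v ∩ f ⁻¹' {0}
  have hbound {x y : ℝ} (hux : u ≤ x) (hxy : x ≤ y) (hyv : y ≤ v) (hZ : ∀ z ∈ Ioo x y, z ∉ Z) :
      ‖f y - f x‖ₑ ≤ ∫⁻ y in Ioo x y, ‖deriv f y‖ₑ := by
    have hsub : Ioo x y ⊆ Ioo u v := Ioo_subset_Ioo hux hyv
    refine enorm_sub_le_setLIntegral_enorm_deriv hxy (hf.mono (Icc_subset_Icc hux hyv))
      (fun z hz ↦ (hd z (hsub hz) fun hz₀ ↦ ?_).differentiableWithinAt) (hi.mono_set hsub)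
    exact hZ z hz ⟨Ioo_subset_Icc_self (hsub hz), hz₀⟩
  rcases Z.eq_empty_or_nonempty with hZ | hZ
  · exact hbound le_rfl huv le_rfl fun z _ ↦ hZ ▸ notMem_empty z
  have hcompact : IsCompact Z := isCompact_Icc.of_isClosed_subset
    (hf.preimage_isClosed_of_isClosed isClosed_Icc isClosed_singleton) inter_subset_left
  obtain ⟨z₁, ⟨⟨huz₁, hz₁v⟩, hfz₁⟩, hleast⟩ := hcompact.exists_isLeast hZ
  obtain ⟨z₂, ⟨⟨huz₂, hz₂v⟩, hfz₂⟩, hgreatest⟩ := hcompact.exists_isGreatest hZ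
  have hz : z₁ ≤ z₂ := hleast ⟨⟨huz₂, hz₂v⟩, hfz₂⟩
  calc ‖f v - f u‖ₑ = ‖(f v - f z₂) + (f z₁ - f u)‖ₑ := by
        rw [mem_preimage.1 hfz₁, mem_preimage.1 hfz₂, sub_zero, zero_sub, sub_eq_add_neg]
    _ ≤ ‖f v - f z₂‖ₑ + ‖f z₁ - f u‖ₑ := enorm_add_le _ _
    _ ≤ (∫⁻ y in Ioo z₂ v, ‖deriv f y‖ₑ) + ∫⁻ y in Ioo u z₁, ‖deriv f y‖ₑ :=
        add_le_add (hbound huz₂ hz₂v le_rfl fun z hz hzZ ↦ hz.1.not_ge (hgreatest hzZ))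
          (hbound le_rfl huz₁ hz₁v fun z hz hzZ ↦ hz.2.not_ge (hleast hzZ))
    _ = ∫⁻ y in Ioo z₂ v ∪ Ioo u z₁, ‖deriv f y‖ₑ :=
        (lintegral_union measurableSet_Ioo <| disjoint_left.2 fun x hx hx' ↦
          (hx'.2.trans_le hz).not_gt hx.1).symm
    _ ≤ ∫⁻ y in Ioo u v, ‖deriv f y‖ₑ :=
        lintegral_mono_set <|
          union_subset (Ioo_subset_Ioo_left huz₂) (Ioo_subset_Ioo_right hz₁v)

lemma absContOn_of_differentiableAt_of_ne_zero (hf : ContinuousOn f S)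
    (hd : ∀ x ∈ S, f x ≠ 0 → DifferentiableAt ℝ f x) (hi : IntegrableOn (deriv f) S) :
    AbsContOn f S :=
  absContOn_of_enorm_sub_le hi.2.ne fun _ _ huv hS ↦
    have hS' := Ioo_subset_Icc_self.trans hS
    enorm_sub_le_setLIntegral_enorm_deriv_of_ne_zero huv (hf.mono hS)
      (fun x hx ↦ hd x (hS' hx)) (hi.mono_set hS')

end AbsoluteContinuity

section RootBound

variable {k : ℕ} {p : ℝ}

lemma exists_forall_setLIntegral_enorm_deriv_root_rpow_le (hk : 2 ≤ k) (hp : 1 ≤ p)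
    (hpk : (k - 1) * p < k) :
    ∃ C : ℝ≥0, ∀ (β : ℕ → ℝ → ℂ) (f : ℝ → ℂ) (a b D : ℝ), a < b → 0 < D →
      ScaledDerivBound β k (D ^ k) a b → ContinuousOn f (Ioo a b) →
      (∀ t ∈ Ioo a b, f t ^ k = β 0 t) →
        ∫⁻ t in Ioo a b, ‖deriv f t‖ₑ ^ p ≤
          ENNReal.ofReal (C * ((D / (b - a)) ^ p * (b - a))) := by
  have hk0 : (0 : ℝ) < k := by positivity
  have hq : k * ((k - 1) * p / k) = (k - 1) * p := mul_div_cancel₀ _ hk0.ne'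
  obtain ⟨C, hC, hbound⟩ :=
    exists_forall_setLIntegral_le_of_scaledDerivBound hk hp ((div_lt_one hk0).2 hpk) hq
  lift C to ℝ≥0 using hC
  refine ⟨C, fun β f a b D hab hD hβ hf hroot ↦ ?_⟩
  rw [ENNReal.ofReal_mul C.coe_nonneg, ENNReal.ofReal_mul (by positivity),
    ENNReal.ofReal_coe_nnreal, ← ENNReal.ofReal_rpow_of_pos (by positivity)]
  exact (lintegral_mono_ae (ae_enorm_deriv_root_rpow_le (by omega) (by linarith) hq
    (fun t ht ↦ hβ.hasDerivAt (by omega) ht) hf hroot)).trans (hbound β a b D hab hD hβ)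

lemma exists_forall_root_Lp_bound (hk : 2 ≤ k) (hp : 1 ≤ p) (hpk : (k - 1) * p < k) :
    ∃ C : ℝ, ∀ (β : ℕ → ℝ → ℂ) (f : ℝ → ℂ) (a b D : ℝ), a < b → 0 < D →
      ScaledDerivBound β k (D ^ k) a b → ContinuousOn f (Ioo a b) →
      (∀ t ∈ Ioo a b, f t ^ k = β 0 t) →
        AbsContOn f (Ioo a b) ∧
        IntegrableOn (fun t ↦ ‖deriv f t‖ ^ p) (Ioo a b) volume ∧
        (∫ t in Ioo a b, ‖deriv f t‖ ^ p) ^ (1 / p) ≤ C * (b - a) ^ (-1 + 1 / p) * D := by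
  obtain ⟨C, hC⟩ := exists_forall_setLIntegral_enorm_deriv_root_rpow_le hk hp hpk
  refine ⟨C ^ (1 / p), fun β f a b D hab hD hβ hf hroot ↦ ?_⟩
  have hL : 0 < b - a := sub_pos.2 hab
  have hp0 : 0 < p := by linarith
  have hbound := hC β f a b D hab hD hβ hf hroot
  have hmem : MemLp (deriv f) (ENNReal.ofReal p) (volume.restrict (Ioo a b)) := by
    refine ⟨(measurable_deriv f).aestronglyMeasurable, ?_⟩
    rw [eLpNorm_lt_top_iff_lintegral_rpow_enorm_lt_top (by simpa) ENNReal.ofReal_ne_top,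
      ENNReal.toReal_ofReal hp0.le]
    exact hbound.trans_lt ENNReal.ofReal_lt_top
  have hint : IntegrableOn (fun t ↦ ‖deriv f t‖ ^ p) (Ioo a b) := by
    simpa only [IntegrableOn, ENNReal.toReal_ofReal hp0.le] using hmem.integrable_norm_rpow'
  refine ⟨absContOn_of_differentiableAt_of_ne_zero hf (fun t ht hft ↦ ?_)
    (hmem.integrable (ENNReal.one_le_ofReal.2 hp)), hint, ?_⟩
  · have hnhds : Ioo a b ∈ 𝓝 t := isOpen_Ioo.mem_nhds ht
    exact (hasDerivAt_root (k := k) (by omega) (hf.continuousAt hnhds)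
      (by filter_upwards [hnhds] using hroot) (hβ.hasDerivAt (by omega) ht) hft).differentiableAt
  · have hreal : ∫ t in Ioo a b, ‖deriv f t‖ ^ p ≤ C * ((D / (b - a)) ^ p * (b - a)) := by
      rw [← ENNReal.ofReal_le_ofReal_iff (by positivity),
        ofReal_integral_eq_lintegral_ofReal hint (ae_of_all _ fun t ↦ by positivity)]
      simpa only [← ENNReal.ofReal_rpow_of_nonneg (norm_nonneg _) hp0.le, ofReal_norm] using hbound
    calc (∫ t in Ioo a b, ‖deriv f t‖ ^ p) ^ (1 / p)
        ≤ (C * ((D / (b - a)) ^ p * (b - a))) ^ (1 / p) := by gcongr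
      _ = C ^ (1 / p) * (((D / (b - a)) ^ p) ^ (1 / p) * (b - a) ^ (1 / p)) := by
        rw [Real.mul_rpow (by positivity) (by positivity),
          Real.mul_rpow (by positivity) (by positivity)]
      _ = C ^ (1 / p) * (b - a) ^ (-1 + 1 / p) * D := by
        rw [one_div, Real.rpow_rpow_inv (by positivity) hp0.ne', Real.rpow_add hL,
          Real.rpow_neg_one]
        ring

theorem root_Lp_bound_after_splitting_general (m : ℕ) (C₀ p : ℝ) (hp1 : 1 ≤ p)
    (hp2 : p < (m : ℝ) / ((m : ℝ) - 1)) :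
    ∃ C : ℝ, 0 < C ∧ ∀ a b : ℝ, a < b → ∀ A : ℝ, 0 < A → ∀ i ∈ Finset.Icc 2 m,
      ∀ β : ℕ → ℝ → ℂ, ScaledDerivBound β i (C₀ * A ^ i) a b →
      ∀ f : ℝ → ℂ, ContinuousOn f (Ioo a b) → (∀ t ∈ Ioo a b, f t ^ i = β 0 t) →
        AbsContOn f (Ioo a b) ∧
        IntegrableOn (fun t ↦ ‖deriv f t‖ ^ p) (Ioo a b) volume ∧
        (∫ t in Ioo a b, ‖deriv f t‖ ^ p) ^ (1 / p) ≤ C * (b - a) ^ (-1 + 1 / p) * A := by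
  have hpi (i : ℕ) (hi : i ∈ Finset.Icc 2 m) : ((i : ℝ) - 1) * p < i := by
    obtain ⟨h2i, him⟩ := Finset.mem_Icc.1 hi
    have h2i' : (2 : ℝ) ≤ i := mod_cast h2i
    have him' : (i : ℝ) ≤ m := mod_cast him
    have hpm := (lt_div_iff₀ (by linarith)).1 hp2
    nlinarith
  choose! C hC using fun i hi ↦ exists_forall_root_Lp_bound (Finset.mem_Icc.1 hi).1 hp1 (hpi i hi)
  obtain ⟨M, hM⟩ := ((Finset.Icc 2 m).image C).exists_le
  refine ⟨max 1 M * max 1 C₀, by positivity, fun a b hab A hA i hi β hβ f hf hroot ↦ ?_⟩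
  have hK : C₀ * A ^ i ≤ (max 1 C₀ * A) ^ i := by
    rw [mul_pow]
    gcongr
    exact (le_max_right 1 C₀).trans
      (le_self_pow₀ (le_max_left _ _) (by have := (Finset.mem_Icc.1 hi).1; omega))
  obtain ⟨hac, hint, hle⟩ := hC i hi β f a b (max 1 C₀ * A) hab (by positivity) (hβ.mono hab hK)
    hf hroot
  refine ⟨hac, hint, hle.trans ?_⟩
  calc C i * (b - a) ^ (-1 + 1 / p) * (max 1 C₀ * A)
      ≤ max 1 M * (b - a) ^ (-1 + 1 / p) * (max 1 C₀ * A) := by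
        gcongr
        exact (hM _ (Finset.mem_image_of_mem C hi)).trans (le_max_right _ _)
    _ = max 1 M * max 1 C₀ * (b - a) ^ (-1 + 1 / p) * A := by ring

lemma MemCk1.scaledDerivBound {E : Type*} [NormedAddCommGroup E] [NormedSpace ℝ E]
    {d : ℕ → ℝ → E} {n : ℕ} {C₀ B a b : ℝ} (hd : MemCk1 d (n - 1) (Icc a b))
    (hbound : ∀ s, 1 ≤ s → s ≤ n - 1 → ∀ t ∈ Ioo a b, ‖d s t‖ ≤ C₀ * ((b - a) ^ s)⁻¹ * B)
    (hlip : ∀ x ∈ Ioo a b, ∀ y ∈ Ioo a b,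
      ‖d (n - 1) x - d (n - 1) y‖ ≤ C₀ * ((b - a) ^ n)⁻¹ * B * |x - y|) :
    ScaledDerivBound d n (C₀ * B) a b where
  derivChain := hd.1.mono le_rfl Ioo_subset_Icc_self
  norm_le s hs hsn t ht := (hbound s hs hsn t ht).trans_eq (mul_right_comm _ _ _)
  norm_sub_le x hx y hy := (hlip x hx y hy).trans_eq (by rw [mul_right_comm C₀])

end RootBound

/-- **Lemma lem:Lpbak.** If `b_i ∈ C^{n-1,1}(Ī)` satisfies
`‖b_i^{(s)}‖_∞ ≤ C₀ |I|^{-s} A^i` for `s = 1,…,n-1` and `Lip_I(b_i^{(n-1)}) ≤ C₀ |I|^{-n} A^i`,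
then every continuous `i`-th root `f_i` of `b_i` is absolutely continuous with
`‖f_i'‖_{L^p(I)} ≤ C |I|^{-1+1/p} A` for `1 ≤ p < m/(m-1)`, `C = C(n,p,C₀)`. -/
theorem root_Lp_bound_after_splitting (n m : ℕ) (hn : 2 ≤ n) (hm2 : 2 ≤ m) (hmn : m ≤ n)
    (C₀ : ℝ) (hC₀ : 0 < C₀) (p : ℝ) (hp1 : 1 ≤ p) (hp2 : p < (m : ℝ) / ((m : ℝ) - 1)) :
    ∃ C : ℝ, 0 < C ∧
      ∀ (a b : ℝ), a < b → ∀ A : ℝ, 0 < A →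
      ∀ d : ℕ → ℕ → ℝ → ℂ,
      (∀ i ∈ Finset.Icc 2 m, MemCk1 (d i) (n - 1) (Icc a b)) →
      (∀ i ∈ Finset.Icc 2 m, ∀ s : ℕ, 1 ≤ s → s ≤ n - 1 →
        ∀ t ∈ Ioo a b, ‖d i s t‖ ≤ C₀ * ((b - a) ^ s)⁻¹ * A ^ i) →
      (∀ i ∈ Finset.Icc 2 m, ∀ x ∈ Ioo a b, ∀ y ∈ Ioo a b,
        ‖d i (n - 1) x - d i (n - 1) y‖ ≤ C₀ * ((b - a) ^ n)⁻¹ * A ^ i * |x - y|) →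
      ∀ i ∈ Finset.Icc 2 m, ∀ f : ℝ → ℂ, ContinuousOn f (Ioo a b) →
      (∀ t ∈ Ioo a b, f t ^ i = d i 0 t) →
      AbsContOn f (Ioo a b) ∧
      IntegrableOn (fun t => ‖deriv f t‖ ^ p) (Ioo a b) volume ∧
      (∫ t in Ioo a b, ‖deriv f t‖ ^ p) ^ (1 / p) ≤ C * (b - a) ^ (-1 + 1 / p) * A := by
  obtain ⟨C, hC, hbound⟩ := root_Lp_bound_after_splitting_general m C₀ p hp1 hp2
  refine ⟨C, hC, fun a b hab A hA d hmem hderiv hlip i hi f hf hroot ↦ ?_⟩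
  obtain ⟨h2i, him⟩ := Finset.mem_Icc.1 hi
  have hd : ScaledDerivBound (d i) n (C₀ * A ^ i) a b :=
    (hmem i hi).scaledDerivBound (hderiv i hi) (hlip i hi)
  exact hbound a b hab A hA i hi (d i) (hd.of_le (by omega) (him.trans hmn)) f hf hroot
end
end

section
/- Let 𝒥 be a finite collection of open intervals of ℝ whose union is a bounded open interval (α,β). Then 𝒥 has a subcollection that still covers (α,β) and such that every point of (α,β) belongs to at most two intervals of the subcollection. -/
open Set

/-! In a subcover that is minimal under inclusion no member is contained in the union of the others.
Among the intervals of such a subcover through a point `x`, choose one reaching furthest to the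
left of `x` and one reaching furthest to the right: together they contain all the others, so by
minimality there are no others. -/

section OrdConnected

variable {ι X : Type*} [LinearOrder X] {x : X}

theorem ordConnected_inter_Iic_subset_total {s t : Set X} (hs : s.OrdConnected)
    (ht : t.OrdConnected) (hxs : x ∈ s) (hxt : x ∈ t) :
    s ∩ Iic x ⊆ t ∩ Iic x ∨ t ∩ Iic x ⊆ s ∩ Iic x := by
  refine or_iff_not_imp_left.2 fun hst => ?_
  obtain ⟨y, ⟨hys, hyx⟩, hyt⟩ := not_subset.1 hst
  rintro z ⟨hzt, hzx⟩
  have hyz : y ≤ z := le_of_not_ge fun hzy => hyt ⟨ht.out hzt hxt ⟨hzy, hyx⟩, hyx⟩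
  exact ⟨hs.out hys hxs ⟨hyz, hzx⟩, hzx⟩

theorem exists_forall_inter_Iic_subset {f : ι → Set X} {T : Set ι} (hT : T.Finite)
    (hne : T.Nonempty) (hf : ∀ i ∈ T, (f i).OrdConnected) (hx : ∀ i ∈ T, x ∈ f i) :
    ∃ a ∈ T, ∀ i ∈ T, f i ∩ Iic x ⊆ f a ∩ Iic x := by
  obtain ⟨a, ha, hmax⟩ := hT.exists_maximalFor (fun i => f i ∩ Iic x) T hne
  refine ⟨a, ha, fun i hi => ?_⟩
  exact (ordConnected_inter_Iic_subset_total (hf i hi) (hf a ha) (hx i hi) (hx a ha)).elim id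
    (hmax hi)

theorem exists_forall_inter_Ici_subset {f : ι → Set X} {T : Set ι} (hT : T.Finite)
    (hne : T.Nonempty) (hf : ∀ i ∈ T, (f i).OrdConnected) (hx : ∀ i ∈ T, x ∈ f i) :
    ∃ b ∈ T, ∀ i ∈ T, f i ∩ Ici x ⊆ f b ∩ Ici x :=
  exists_forall_inter_Iic_subset (X := Xᵒᵈ) hT hne (fun i hi => (hf i hi).dual) hx

theorem exists_forall_subset_union_of_ordConnected {f : ι → Set X} {T : Set ι} (hT : T.Finite)
    (hne : T.Nonempty) (hf : ∀ i ∈ T, (f i).OrdConnected) (hx : ∀ i ∈ T, x ∈ f i) :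
    ∃ a ∈ T, ∃ b ∈ T, ∀ i ∈ T, f i ⊆ f a ∪ f b := by
  obtain ⟨a, ha, hleft⟩ := exists_forall_inter_Iic_subset hT hne hf hx
  obtain ⟨b, hb, hright⟩ := exists_forall_inter_Ici_subset hT hne hf hx
  refine ⟨a, ha, b, hb, fun i hi y hy => ?_⟩
  rcases le_total y x with hyx | hxy
  · exact Or.inl (hleft i hi ⟨hy, hyx⟩).1
  · exact Or.inr (hright i hi ⟨hy, hxy⟩).1

end OrdConnected

section Subcover

variable {ι X : Type*} {f : ι → Set X} {t : Finset ι} {U : Set X}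

theorem not_subset_biUnion_erase_of_minimal [DecidableEq ι]
    (ht : Minimal (fun t : Finset ι => ⋃ i ∈ t, f i = U) t) {i : ι} (hi : i ∈ t) :
    ¬ f i ⊆ ⋃ j ∈ t.erase i, f j := fun hsub => by
  refine ht.not_prop_of_lt (Finset.erase_ssubset hi) ?_
  calc ⋃ j ∈ t.erase i, f j
      = f i ∪ ⋃ j ∈ t.erase i, f j := (union_eq_right.2 hsub).symm
    _ = ⋃ j ∈ t, f j := by rw [← Finset.set_biUnion_insert, Finset.insert_erase hi]
    _ = U := ht.prop

theorem encard_setOf_mem_le_two_of_minimal [LinearOrder X]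
    (ht : Minimal (fun t : Finset ι => ⋃ i ∈ t, f i = U) t)
    (hf : ∀ i ∈ t, (f i).OrdConnected) (x : X) :
    {i | i ∈ t ∧ x ∈ f i}.encard ≤ 2 := by
  classical
  rcases {i | i ∈ t ∧ x ∈ f i}.eq_empty_or_nonempty with hempty | hne
  · simp [hempty]
  have hfin : {i | i ∈ t ∧ x ∈ f i}.Finite := t.finite_toSet.subset fun _ hi => hi.1
  obtain ⟨a, ha, b, hb, hcover⟩ := exists_forall_subset_union_of_ordConnected hfin hne
    (fun i hi => hf i hi.1) fun _ hi => hi.2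
  have hpair : {i | i ∈ t ∧ x ∈ f i} ⊆ {a, b} := by
    intro i hi
    by_contra hiab
    obtain ⟨hia, hib⟩ : i ≠ a ∧ i ≠ b := by simpa using hiab
    refine not_subset_biUnion_erase_of_minimal ht hi.1 ((hcover i hi).trans (union_subset ?_ ?_))
    · exact subset_biUnion_of_mem (u := f) (Finset.mem_erase.2 ⟨hia.symm, ha.1⟩)
    · exact subset_biUnion_of_mem (u := f) (Finset.mem_erase.2 ⟨hib.symm, hb.1⟩)
  calc {i | i ∈ t ∧ x ∈ f i}.encard
      ≤ ({a, b} : Set ι).encard := encard_le_encard hpair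
    _ ≤ ({b} : Set ι).encard + 1 := encard_insert_le {b} a
    _ = 2 := by rw [encard_singleton, one_add_one_eq_two]

theorem finite_subcover_multiplicity_two_general [LinearOrder X] (s : Finset ι)
    (f : ι → Set X) (hf : ∀ i ∈ s, (f i).OrdConnected) :
    ∃ t ⊆ s, (⋃ i ∈ t, f i) = ⋃ i ∈ s, f i ∧ ∀ x, {i | i ∈ t ∧ x ∈ f i}.encard ≤ 2 := by
  obtain ⟨t, hts, ht⟩ := exists_minimal_le_of_wellFoundedLT
    (fun t : Finset ι => ⋃ i ∈ t, f i = ⋃ i ∈ s, f i) s rfl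
  exact ⟨t, hts, ht.prop, encard_setOf_mem_le_two_of_minimal ht fun i hi => hf i (hts hi)⟩

end Subcover

/-- Every finite collection of open intervals whose union is a bounded
open interval `(α,β)` has a subcollection that still covers `(α,β)` and such that every
point of `(α,β)` belongs to at most two intervals of the subcollection. -/
theorem finite_subcover_multiplicity_two (α β : ℝ) (hαβ : α < β)
    (𝒥 : Finset (ℝ × ℝ))
    (hunion : (⋃ p ∈ 𝒥, Ioo p.1 p.2) = Ioo α β) :
    ∃ S : Finset (ℝ × ℝ), S ⊆ 𝒥 ∧ (⋃ p ∈ S, Ioo p.1 p.2) = Ioo α β ∧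
      ∀ x ∈ Ioo α β, {p | p ∈ S ∧ x ∈ Ioo p.1 p.2}.encard ≤ 2 := by
  obtain ⟨S, hS, hcover, hmult⟩ := finite_subcover_multiplicity_two_general 𝒥
    (fun p => Ioo p.1 p.2) fun _ _ => ordConnected_Ioo
  exact ⟨S, hS, hcover.trans hunion, fun x _ => hmult x⟩
end
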